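/- With notation as usual, define N₄(B) = Σ_{u₁ | C(ξ₁), u₂ ≤ ξ₃} M⁺_{ℛ_l}(B)/k^{ω(𝒟)}, where M⁺_{ℛ_l}(B) = (3B)ⁿ·#ℛ_l/lⁿ and l = u₁u₂𝒟. Then there exists a positive constant C₄ such that N₄(B) = O(Bⁿ·exp(2(n+1)(k−1)ξ₁)/(log B)^{C₄/log₃B}). In particular, choosing ξ₁(B) = max{1, C₄ log₂B/(4(n+1)(k−1)log₃B)} gives N₄(B) = O(Bⁿ·exp(−C₄ log₂B/(2log₃B))) = o(Bⁿ). -/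

import Mathlib

open MvPolynomial Filter Pointwise

noncomputable section

/-- The linear form with coefficient vector `c`. -/
def linForm {R : Type*} [CommRing R] {n : ℕ} (c : Fin n → R) : MvPolynomial (Fin n) R :=
  ∑ i, C (c i) * X i

/-- `ρ_F(m)`: the number of zeros of `F` in `(ℤ/mℤ)ⁿ`. -/
def rhoF {n : ℕ} (F : MvPolynomial (Fin n) ℤ) (m : ℕ) : ℕ :=
  Nat.card {a : Fin n → ZMod m // MvPolynomial.eval a (F.map (Int.castRingHom (ZMod m))) = 0}

/-- The discriminant `Δ(F) = ∏_{i₁<⋯<iₙ} |det(L_{i₁},…,L_{iₙ})|`, the product being over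
all `n`-element subsets of the linear factors (parametrized by strictly monotone maps). -/
def discProd {n d : ℕ} (L : Fin d → Fin n → ℂ) : ℝ :=
  ∏ᶠ g ∈ {g : Fin n → Fin d | StrictMono g},
    ‖Matrix.det (Matrix.of fun i j => L (g i) j)‖

/-- `F` is a decomposable form with linear factors `L₁,…,L_d` having
algebraic-integer coefficients. -/
def IsDecomp {n d : ℕ} (F : MvPolynomial (Fin n) ℤ) (L : Fin d → Fin n → ℂ) : Prop :=
  (∀ j i, IsIntegral ℤ (L j i)) ∧ F.map (Int.castRingHom ℂ) = ∏ j, linForm (L j)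

/-- An integer is `k`-free if it is divisible by no `k`-th power of a prime. -/
def KFree (k : ℕ) (N : ℤ) : Prop := ∀ p : ℕ, p.Prime → ¬ ((p : ℤ) ^ k ∣ N)

/-- `N_{F,k}(B)`. -/
def NFk {n : ℕ} (F : MvPolynomial (Fin n) ℤ) (k : ℕ) (B : ℝ) : ℕ :=
  Set.ncard {x : Fin n → ℤ | (∀ i, |(x i : ℝ)| ≤ B) ∧ KFree k (MvPolynomial.eval x F)}

def log1 (x : ℝ) : ℝ := max 1 (Real.log x)
def log2 (x : ℝ) : ℝ := log1 (log1 x)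
def log3 (x : ℝ) : ℝ := log1 (log2 x)

/-- `ξ₁` is eventually increasing, tends to infinity and is `O(log₂ B / log₃ B)`. -/
def Xi1Good (ξ₁ : ℝ → ℝ) : Prop :=
  (∃ B₀ : ℝ, ∀ ⦃B B' : ℝ⦄, B₀ ≤ B → B ≤ B' → ξ₁ B ≤ ξ₁ B') ∧
  Tendsto ξ₁ atTop atTop ∧ (ξ₁ =O[atTop] fun B => log2 B / log3 B)

def xi2 (n : ℕ) (B : ℝ) : ℝ := B ^ n * Real.log B ^ ((2 : ℝ) / 3)

def xi3 (C₁ : ℝ) (k : ℕ) (B : ℝ) : ℝ := C₁ * B ^ 2 * Real.log B ^ (-(2 * (k : ℝ)) / 3)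

/-- `C(ξ₁) = ∏_{p ≤ ξ₁} p^{k-1}`. -/
def Cxi (k : ℕ) (ξ : ℝ) : ℕ := ∏ᶠ p ∈ {p : ℕ | p.Prime ∧ (p : ℝ) ≤ ξ}, p ^ (k - 1)

/-- `𝒟(u₂) = ∏ p` over primes `ξ₁ < p ≤ (1/12)log(B²/u₂)`, `p ∤ u₂`, `p ≡ 1 (mod k)`. -/
def scrD (k : ℕ) (ξ₁ B : ℝ) (u₂ : ℕ) : ℕ :=
  ∏ᶠ p ∈ {p : ℕ | p.Prime ∧ ξ₁ < (p : ℝ) ∧ (p : ℝ) ≤ Real.log (B ^ 2 / (u₂ : ℝ)) / 12 ∧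
      ¬ p ∣ u₂ ∧ p % k = 1}, p

/-- The set `𝒮_p ⊆ 𝔽_pⁿ` attached to a factorization `F = F*·∏𝓛ᵢ` over `ℤ_p`. -/
def Sp {n : ℕ} (p : ℕ) (hp : p.Prime) {τ : ℕ}
    (𝓛 : Fin τ → Fin n → @PadicInt p ⟨hp⟩)
    (Fstar : MvPolynomial (Fin n) (@PadicInt p ⟨hp⟩)) (x : Fin n → ZMod p) : Prop :=
  (∃ i j : Fin τ, i < j ∧ (∑ m, (@PadicInt.toZMod p ⟨hp⟩) (𝓛 i m) * x m) = 0 ∧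
      (∑ m, (@PadicInt.toZMod p ⟨hp⟩) (𝓛 j m) * x m) = 0) ∨
  MvPolynomial.eval x (Fstar.map (@PadicInt.toZMod p ⟨hp⟩)) = 0

/-- The data `(𝓛ᵢ, F*)` is a factorization of `F` over `ℤ_p` with `F*` having no
linear factor over `ℚ_p`. -/
def IsPadicFact {n : ℕ} (F : MvPolynomial (Fin n) ℤ) (p : ℕ) (hp : p.Prime) {τ : ℕ}
    (𝓛 : Fin τ → Fin n → @PadicInt p ⟨hp⟩)
    (Fstar : MvPolynomial (Fin n) (@PadicInt p ⟨hp⟩)) : Prop :=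
  F.map (Int.castRingHom (@PadicInt p ⟨hp⟩)) = Fstar * ∏ i, linForm (𝓛 i) ∧
  ∀ c : Fin n → @Padic p ⟨hp⟩, (∃ i, c i ≠ 0) →
    ¬ (linForm c ∣ Fstar.map (@PadicInt.Coe.ringHom p ⟨hp⟩))


-- τ_F(p) intrinsically: number of linear factors of F mod p up to scaling
def tauFp {n : ℕ} (F : MvPolynomial (Fin n) ℤ) (p : ℕ) : ℕ :=
  Nat.card {c : Fin n → ZMod p //
    (∃ i, c i = 1 ∧ ∀ j, j < i → c j = 0) ∧
    linForm c ∣ F.map (Int.castRingHom (ZMod p))}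

def tauF {n : ℕ} (F : MvPolynomial (Fin n) ℤ) (m : ℕ) : ℕ :=
  ∏ p ∈ m.primeFactors, tauFp F p

def sigmaPow (α : ℝ) (m : ℕ) : ℝ := ∑ s ∈ m.divisors, (s : ℝ) ^ α

-- sup norm / lattice minimum / lattice point count
def supNorm {n : ℕ} (x : Fin n → ℤ) : ℕ := Finset.univ.sup fun i => (x i).natAbs

def latMin {n : ℕ} (Λ : AddSubgroup (Fin n → ℤ)) : ℕ :=
  sInf {m : ℕ | ∃ x ∈ Λ, x ≠ 0 ∧ supNorm x = m}

def NLat {n : ℕ} (Λ : AddSubgroup (Fin n → ℤ)) (B : ℝ) : ℕ :=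
  Set.ncard {x : Fin n → ℤ | x ∈ Λ ∧ ∀ i, |(x i : ℝ)| ≤ B}

-- the H_{u₁,u₂}(B) count
def Hcount {n : ℕ} (F : MvPolynomial (Fin n) ℤ)
    {τ : ∀ p : ℕ, p.Prime → ℕ}
    (𝓛 : ∀ (p : ℕ) (hp : p.Prime), Fin (τ p hp) → Fin n → @PadicInt p ⟨hp⟩)
    (Fstar : ∀ (p : ℕ) (hp : p.Prime), MvPolynomial (Fin n) (@PadicInt p ⟨hp⟩))
    (k u₁ u₂ D : ℕ) (B : ℝ) : ℕ :=
  Set.ncard {m : Fin n → ℤ | (∀ i, |(m i : ℝ)| ≤ B) ∧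
    (u₁ : ℤ) ∣ MvPolynomial.eval m F ∧ (u₂ : ℤ) ∣ MvPolynomial.eval m F ∧
    (∃ s : ℕ, s < D ∧ (D : ℤ) ∣ (MvPolynomial.eval m F - (u₁ : ℤ) * u₂ * (s : ℤ) ^ k)) ∧
    ∀ (p : ℕ) (hp : p.Prime), p ∣ u₁ * u₂ →
      ¬ Sp p hp (𝓛 p hp) (Fstar p hp) (fun i => ((m i : ZMod p)))}

-- N₃(B)
def N3count {n : ℕ} (F : MvPolynomial (Fin n) ℤ) (k : ℕ) (ξ₁ ξ₂ B : ℝ) : ℕ :=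
  Set.ncard {x : Fin n → ℤ | (∀ i, |(x i : ℝ)| ≤ B) ∧
    (∃ p : ℕ, p.Prime ∧ ξ₂ < (p : ℝ) ∧ (p : ℤ) ^ k ∣ MvPolynomial.eval x F) ∧
    (∀ p : ℕ, p.Prime → ξ₁ < (p : ℝ) → (p : ℝ) ≤ ξ₂ → ¬ ((p : ℤ) ^ 2 ∣ MvPolynomial.eval x F)) ∧
    (∀ p : ℕ, p.Prime → (p : ℤ) ^ k ∣ MvPolynomial.eval x F → ξ₁ < (p : ℝ))}

-- N₃*(B)
def N3starCount {n : ℕ}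
    {τ : ∀ p : ℕ, p.Prime → ℕ}
    (𝓛 : ∀ (p : ℕ) (hp : p.Prime), Fin (τ p hp) → Fin n → @PadicInt p ⟨hp⟩)
    (Fstar : ∀ (p : ℕ) (hp : p.Prime), MvPolynomial (Fin n) (@PadicInt p ⟨hp⟩))
    (ξ₁ B : ℝ) : ℕ :=
  Set.ncard {x : Fin n → ℤ | (∀ i, |(x i : ℝ)| ≤ B) ∧
    ∃ (p : ℕ) (hp : p.Prime), ξ₁ < (p : ℝ) ∧
      Sp p hp (𝓛 p hp) (Fstar p hp) (fun i => ((x i : ZMod p)))}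

-- N₃†(B)
def N3dag {n : ℕ} (F : MvPolynomial (Fin n) ℤ)
    {τ : ∀ p : ℕ, p.Prime → ℕ}
    (𝓛 : ∀ (p : ℕ) (hp : p.Prime), Fin (τ p hp) → Fin n → @PadicInt p ⟨hp⟩)
    (Fstar : ∀ (p : ℕ) (hp : p.Prime), MvPolynomial (Fin n) (@PadicInt p ⟨hp⟩))
    (k : ℕ) (ξ₁ ξ₂ B : ℝ) : ℕ :=
  Set.ncard {x : Fin n → ℤ | (∀ i, |(x i : ℝ)| ≤ B) ∧
    ∃ (u : ℤ) (q : ℕ), q.Prime ∧ ξ₂ < (q : ℝ) ∧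
      MvPolynomial.eval x F = u * (q : ℤ) ^ k ∧
      (∀ p : ℕ, p.Prime → (p : ℝ) ≤ ξ₁ → ¬ ((p : ℤ) ^ k ∣ u)) ∧
      (∀ p : ℕ, p.Prime → ξ₁ < (p : ℝ) → (p : ℝ) ≤ ξ₂ → ¬ ((p : ℤ) ^ 2 ∣ u)) ∧
      (∀ (p : ℕ) (hp : p.Prime), (p : ℤ) ∣ u →
        ¬ Sp p hp (𝓛 p hp) (Fstar p hp) (fun i => ((x i : ZMod p))))}

-- ℛ_l : congruence classes mod l = u₁u₂D
def Rset {n : ℕ} (F : MvPolynomial (Fin n) ℤ)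
    {τ : ∀ p : ℕ, p.Prime → ℕ}
    (𝓛 : ∀ (p : ℕ) (hp : p.Prime), Fin (τ p hp) → Fin n → @PadicInt p ⟨hp⟩)
    (Fstar : ∀ (p : ℕ) (hp : p.Prime), MvPolynomial (Fin n) (@PadicInt p ⟨hp⟩))
    (k u₁ u₂ D : ℕ) : Set (Fin n → ZMod (u₁ * u₂ * D)) :=
  {m | ∃ a : Fin n → ℤ, (∀ i, ((a i : ZMod (u₁ * u₂ * D))) = m i) ∧
    (u₁ : ℤ) ∣ MvPolynomial.eval a F ∧ (u₂ : ℤ) ∣ MvPolynomial.eval a F ∧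
    (∃ s : ℕ, s < D ∧ (D : ℤ) ∣ (MvPolynomial.eval a F - (u₁ : ℤ) * u₂ * (s : ℤ) ^ k)) ∧
    ∀ (p : ℕ) (hp : p.Prime), p ∣ u₁ * u₂ →
      ¬ Sp p hp (𝓛 p hp) (Fstar p hp) (fun i => ((a i : ZMod p)))}

-- exponential sum E_ℛ(t; l)
def Esum {n l : ℕ} (R : Set (Fin n → ZMod l)) (t : Fin n → ℤ) : ℂ :=
  ∑ᶠ a ∈ R, Complex.exp (-(2 * Real.pi * Complex.I) *
    (∑ i, ((a i).val : ℂ) * (t i : ℂ)) / (l : ℂ))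

def Mplus {n : ℕ} (l : ℕ) (R : Set (Fin n → ZMod l)) (B : ℝ) : ℝ :=
  (3 * B) ^ n * R.ncard / (l : ℝ) ^ n

def Mpp {n : ℕ} (l : ℕ) (R : Set (Fin n → ZMod l)) (B : ℝ) : ℝ :=
  B ^ n / (l : ℝ) ^ n *
    ∑ᶠ t ∈ {t : Fin n → ℤ | t ≠ 0 ∧ ∀ i, |(t i : ℝ)| ≤ (l : ℝ) / B},
      ‖Esum R t‖

-- S(t; p)
def Ssum {n : ℕ} (p : ℕ) (hp : p.Prime) {τ : ℕ}
    (𝓛 : Fin τ → Fin n → @PadicInt p ⟨hp⟩) (t : Fin n → ℤ) : ℂ :=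
  ∑ i : Fin τ,
    ∑ᶠ a ∈ {a : Fin n → ZMod p | (∑ m, (@PadicInt.toZMod p ⟨hp⟩) (𝓛 i m) * a m) = 0},
      Complex.exp ((2 * Real.pi * Complex.I) *
        (∑ m, ((a m).val : ℂ) * (t m : ℂ)) / (p : ℂ))

-- |S(t; l)| for squarefree l
def SabsSF {n : ℕ} {τ : ∀ p : ℕ, p.Prime → ℕ}
    (𝓛 : ∀ (p : ℕ) (hp : p.Prime), Fin (τ p hp) → Fin n → @PadicInt p ⟨hp⟩)
    (l : ℕ) (t : Fin n → ℤ) : ℝ :=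
  ∏ p ∈ l.primeFactors.attach,
    ‖Ssum p.1 (Nat.prime_of_mem_primeFactors p.2)
      (𝓛 p.1 (Nat.prime_of_mem_primeFactors p.2)) t‖

-- admissible u₂'s
def U2set (ξ₁ ξ₂ ξ₃ : ℝ) : Set ℕ :=
  {u | 0 < u ∧ (u : ℝ) ≤ ξ₃ ∧ Squarefree u ∧
    ∀ p ∈ u.primeFactors, ξ₁ < (p : ℝ) ∧ (p : ℝ) ≤ ξ₂}


-- extra defs for theorems

/-- `N₄(B)` from Lemma N4B. -/
def N4sum {n : ℕ} (F : MvPolynomial (Fin n) ℤ)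
    {τ : ∀ p : ℕ, p.Prime → ℕ}
    (𝓛 : ∀ (p : ℕ) (hp : p.Prime), Fin (τ p hp) → Fin n → @PadicInt p ⟨hp⟩)
    (Fstar : ∀ (p : ℕ) (hp : p.Prime), MvPolynomial (Fin n) (@PadicInt p ⟨hp⟩))
    (k : ℕ) (C₁ : ℝ) (ξ₁ : ℝ → ℝ) (B : ℝ) : ℝ :=
  ∑ᶠ u₁ ∈ {u₁ : ℕ | u₁ ∣ Cxi k (ξ₁ B)},
    ∑ᶠ u₂ ∈ U2set (ξ₁ B) (xi2 n B) (xi3 C₁ k B),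
      Mplus (u₁ * u₂ * scrD k (ξ₁ B) B u₂)
        (Rset F 𝓛 Fstar k u₁ u₂ (scrD k (ξ₁ B) B u₂)) B /
        (k : ℝ) ^ (scrD k (ξ₁ B) B u₂).primeFactors.card

/-- the inner truncated sum `Σ'_{|tᵢ|≤Y} |S(t;u₂)|`. -/
def Ssumbox {n : ℕ} {τ : ∀ p : ℕ, p.Prime → ℕ}
    (𝓛 : ∀ (p : ℕ) (hp : p.Prime), Fin (τ p hp) → Fin n → @PadicInt p ⟨hp⟩)
    (u₂ : ℕ) (Y : ℝ) : ℝ :=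
  ∑ᶠ t ∈ {t : Fin n → ℤ | t ≠ 0 ∧ ∀ i, |(t i : ℝ)| ≤ Y}, SabsSF 𝓛 u₂ t

/-- `Q` restricted to a set of `u₂`'s. -/
def QUgen {n : ℕ} {τ : ∀ p : ℕ, p.Prime → ℕ}
    (𝓛 : ∀ (p : ℕ) (hp : p.Prime), Fin (τ p hp) → Fin n → @PadicInt p ⟨hp⟩)
    (S : Set ℕ) (B : ℝ) : ℝ :=
  ∑ᶠ u₂ ∈ S, (1 / (u₂ : ℝ) ^ n) *
    Ssumbox 𝓛 u₂ ((u₂ : ℝ) ^ ((9 : ℝ) / 10) / B ^ ((4 : ℝ) / 5))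

/-- `l* = ∏_{p ≤ Ξ, p | u₂} p`. -/
def lstar (u₂ : ℕ) (Ξ : ℝ) : ℕ :=
  ∏ᶠ p ∈ {p : ℕ | p.Prime ∧ p ∣ u₂ ∧ (p : ℝ) ≤ Ξ}, p

/-- Abel summation bound: a weighted sum with antitone weights and bounded partial sums. -/
theorem norm_sum_Ico_mul_le_of_antitone (c : ℕ → ℂ) (a : ℕ → ℝ) (K : ℝ)
    (hK : ∀ N, ‖∑ i ∈ Finset.range N, c i‖ ≤ K) (M : ℕ)
    (hanti : ∀ i, M ≤ i → a (i + 1) ≤ a i) (hnonneg : ∀ i, M ≤ i → 0 ≤ a i)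
    (N : ℕ) (hN : M ≤ N) :
    ‖∑ i ∈ Finset.Ico M N, (a i : ℂ) * c i‖ ≤ 2 * K * a M := by
  have key : ‖∑ i ∈ Finset.Ico M N, (a i : ℂ) * c i - a N * ∑ i ∈ Finset.range N, c i‖ ≤
      K * (2 * a M - a N) := by
    induction N, hN using Nat.le_induction with
    | base =>
      simp only [Finset.Ico_self, Finset.sum_empty, zero_sub, norm_neg, norm_mul,
        Complex.norm_real, Real.norm_of_nonneg (hnonneg M le_rfl)]
      nlinarith [hK M, hnonneg M le_rfl]
    | succ N hN ih =>
      rw [Finset.sum_Ico_succ_top hN]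
      have e : ∑ i ∈ Finset.Ico M N, (a i : ℂ) * c i + a N * c N
          - a (N + 1) * ∑ i ∈ Finset.range (N + 1), c i
          = (∑ i ∈ Finset.Ico M N, (a i : ℂ) * c i - a N * ∑ i ∈ Finset.range N, c i)
            + ((a N - a (N + 1) : ℝ) : ℂ) * ∑ i ∈ Finset.range (N + 1), c i := by
        rw [Finset.sum_range_succ]; push_cast; ring
      rw [e]
      refine (norm_add_le _ _).trans ?_
      rw [norm_mul, Complex.norm_real, Real.norm_of_nonneg (by linarith [hanti N hN])]
      nlinarith [hK (N + 1), hanti N hN]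
  have h2 : ‖(a N : ℂ) * ∑ i ∈ Finset.range N, c i‖ ≤ K * a N := by
    rw [norm_mul, Complex.norm_real, Real.norm_of_nonneg (hnonneg N hN)]
    nlinarith [hK N, hnonneg N hN]
  calc _ = ‖(∑ i ∈ Finset.Ico M N, (a i : ℂ) * c i - a N * ∑ i ∈ Finset.range N, c i)
        + (a N : ℂ) * ∑ i ∈ Finset.range N, c i‖ := by rw [sub_add_cancel]
    _ ≤ _ := (norm_add_le _ _).trans (by linarith)

theorem sum_range_dirichletCharacter_eq_zero {k : ℕ} [NeZero k] {χ : DirichletCharacter ℂ k}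
    (hχ : χ ≠ 1) : ∑ i ∈ Finset.range k, χ (i : ZMod k) = 0 := by
  rw [← MulChar.sum_eq_zero_of_ne_one hχ]
  refine Finset.sum_bij' (fun i _ => (i : ZMod k)) (fun z _ => z.val) ?_ ?_ ?_ ?_ ?_
  · simp
  · intro z _; simpa using ZMod.val_lt z
  · intro i hi; simpa using ZMod.val_cast_of_lt (Finset.mem_range.1 hi)
  · intro z _; simp
  · simp

theorem norm_sum_range_dirichletCharacter_le {k : ℕ} [NeZero k] {χ : DirichletCharacter ℂ k}
    (hχ : χ ≠ 1) (N : ℕ) : ‖∑ i ∈ Finset.range N, χ (i : ZMod k)‖ ≤ k := by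
  induction N using Nat.strong_induction_on with
  | _ N ih =>
    by_cases h : N < k
    · refine (norm_sum_le _ _).trans ((Finset.sum_le_sum fun i _ => χ.norm_le_one _).trans ?_)
      simpa using h.le
    · obtain ⟨m, rfl⟩ : ∃ m, N = k + m := ⟨N - k, by omega⟩
      rw [Finset.sum_range_add, sum_range_dirichletCharacter_eq_zero hχ, zero_add]
      simpa using ih m (by have := NeZero.pos k; omega)

/-- Truncations of `∑ χ(j)/j` approximate `L(1, χ)`. -/
theorem norm_sum_range_div_sub_LFunction_one_le {k : ℕ} [NeZero k]
    {χ : DirichletCharacter ℂ k} (hχ : χ ≠ 1) (N : ℕ) (hN : 1 ≤ N) :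
    ‖∑ j ∈ Finset.range N, χ (j : ZMod k) / j - DirichletCharacter.LFunction χ 1‖
      ≤ 2 * k / N := by
  have hN0 : (0 : ℝ) < N := by exact_mod_cast hN
  have hs : ∀ s : ℝ, 1 < s →
      ‖∑ j ∈ Finset.range N, LSeries.term (fun n => χ n) s j
        - DirichletCharacter.LFunction χ s‖ ≤ 2 * k / N := by
    intro s hs
    have hs' : 1 < (s : ℂ).re := by simpa using hs
    rw [DirichletCharacter.LFunction_eq_LSeries χ hs']
    have hsum : LSeriesSummable (fun n => χ n) (s : ℂ) :=
      DirichletCharacter.LSeriesSummable_of_one_lt_re χ hs'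
    have htend := (hsum.hasSum.tendsto_sum_nat)
    refine le_of_tendsto' (x := atTop)
      (f := fun M : ℕ => ‖∑ j ∈ Finset.range N, LSeries.term (fun n => χ n) s j
        - ∑ j ∈ Finset.range (M + N), LSeries.term (fun n => χ n) s j‖) ?_ ?_
    · exact (tendsto_const_nhds.sub ((tendsto_add_atTop_iff_nat N).2 htend)).norm
    · intro M
      rw [norm_sub_rev, ← Finset.sum_Ico_eq_sub _ (Nat.le_add_left N M)]
      have e : ∀ j ∈ Finset.Ico N (M + N), LSeries.term (fun n => χ n) s j
          = (((j : ℝ) ^ (-s) : ℝ) : ℂ) * χ j := by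
        intro j hj
        have hj0 : j ≠ 0 := by have := (Finset.mem_Ico.1 hj).1; omega
        rw [LSeries.term_of_ne_zero hj0, Complex.ofReal_cpow (by positivity)]
        push_cast
        rw [Complex.cpow_neg, div_eq_inv_mul]
      rw [Finset.sum_congr rfl e]
      refine (norm_sum_Ico_mul_le_of_antitone (fun j => χ j) (fun j => (j : ℝ) ^ (-s)) k
        (norm_sum_range_dirichletCharacter_le hχ) N ?_ ?_ _ (Nat.le_add_left _ _)).trans ?_
      · intro i hi
        have : (0 : ℝ) < i := by exact_mod_cast (by omega : 0 < i)
        apply Real.rpow_le_rpow_of_nonpos this (by push_cast; linarith) (by linarith)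
      · intro i hi; positivity
      · rw [mul_div_assoc, mul_assoc]
        have : (N : ℝ) ^ (-s) ≤ 1 / N := by
          rw [one_div, ← Real.rpow_neg_one]
          exact Real.rpow_le_rpow_of_exponent_le (by exact_mod_cast hN) (by linarith)
        calc 2 * ((k : ℝ) * (N : ℝ) ^ (-s)) ≤ 2 * (k * (1 / N)) := by gcongr
          _ = 2 * (k / N) := by ring
  have hcont : Tendsto (fun s : ℝ => ‖∑ j ∈ Finset.range N, LSeries.term (fun n => χ n) s j
        - DirichletCharacter.LFunction χ s‖) (nhdsWithin 1 (Set.Ioi 1))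
      (nhds ‖∑ j ∈ Finset.range N, LSeries.term (fun n => χ n) 1 j
        - DirichletCharacter.LFunction χ 1‖) := by
    refine (Tendsto.sub ?_ ?_).norm
    · refine tendsto_finsetSum _ fun j _ => ?_
      by_cases hj : j = 0
      · simp [hj]
      · simp only [LSeries.term_of_ne_zero hj]
        refine tendsto_const_nhds.div ?_ (by simp [hj])
        have : Continuous fun s : ℝ => (j : ℂ) ^ (s : ℂ) :=
          Complex.continuous_ofReal.const_cpow (Or.inl (by exact_mod_cast hj))
        simpa using (this.tendsto 1).mono_left nhdsWithin_le_nhds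
    · have : Continuous fun s : ℝ => DirichletCharacter.LFunction χ s :=
        (DirichletCharacter.differentiable_LFunction hχ).continuous.comp Complex.continuous_ofReal
      simpa using (this.tendsto 1).mono_left nhdsWithin_le_nhds
  have := le_of_tendsto hcont (eventually_nhdsWithin_of_forall fun s h => hs s h)
  rwa [Finset.sum_congr rfl fun j _ => ?_]
  by_cases hj : j = 0
  · simp [hj]
  · simp [LSeries.term_of_ne_zero hj]

theorem norm_sum_log_div_le {k : ℕ} [NeZero k] {χ : DirichletCharacter ℂ k} (hχ : χ ≠ 1) :
    ∃ K : ℝ, ∀ N : ℕ, ‖∑ n ∈ Finset.Ioc 0 N, χ (n : ZMod k) * Real.log n / n‖ ≤ K := by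
  refine ⟨2 * k * (Real.log 3 / 3) + (‖∑ n ∈ Finset.range 3, χ (n : ZMod k) * Real.log n / n‖
    + ∑ N ∈ Finset.range 3, ‖∑ n ∈ Finset.range N, χ (n : ZMod k) * Real.log n / n‖), ?_⟩
  intro N
  have h0 : ∑ n ∈ Finset.Ioc 0 N, χ (n : ZMod k) * Real.log n / n
      = ∑ n ∈ Finset.range (N + 1), χ (n : ZMod k) * Real.log n / n := by
    rw [Finset.sum_range_eq_add_Ico _ (Nat.succ_pos N)]
    simp only [Nat.cast_zero, Real.log_zero, Complex.ofReal_zero, mul_zero, zero_div, zero_add]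
    rfl
  rw [h0]
  have hlog : 0 ≤ Real.log 3 := Real.log_nonneg (by norm_num)
  by_cases hN : N + 1 < 3
  · have := Finset.single_le_sum (f := fun N => ‖∑ n ∈ Finset.range N,
      χ (n : ZMod k) * Real.log n / n‖) (fun i _ => norm_nonneg _) (Finset.mem_range.2 hN)
    have h2 := norm_nonneg (∑ n ∈ Finset.range 3, χ (n : ZMod k) * Real.log n / n)
    have h3 : 0 ≤ 2 * (k : ℝ) * (Real.log 3 / 3) := by positivity
    linarith
  · have hN : 3 ≤ N + 1 := by omega
    rw [← Finset.sum_range_add_sum_Ico _ hN]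
    have e : ∀ n ∈ Finset.Ico 3 (N + 1), χ (n : ZMod k) * Real.log n / n
        = ((Real.log n / n : ℝ) : ℂ) * χ n := by
      intro n _; push_cast; ring
    have h1 := norm_sum_Ico_mul_le_of_antitone (fun j => χ j) (fun j => Real.log j / j) k
        (norm_sum_range_dirichletCharacter_le hχ) 3 (by
          intro i hi
          have h3 : Real.exp 1 ≤ (i : ℝ) :=
            Real.exp_one_lt_three.le.trans (by exact_mod_cast hi)
          exact Real.log_div_self_antitoneOn h3 (h3.trans (by simp)) (by simp))
        (fun i hi => div_nonneg (Real.log_natCast_nonneg i) (Nat.cast_nonneg i)) _ hN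
    rw [← Finset.sum_congr rfl e] at h1
    refine (norm_add_le _ _).trans ?_
    have h4 : 0 ≤ ∑ N ∈ Finset.range 3,
      ‖∑ n ∈ Finset.range N, χ (n : ZMod k) * Real.log n / n‖ :=
      Finset.sum_nonneg fun _ _ => norm_nonneg _
    simp only [Nat.cast_ofNat] at h1
    linarith

open ArithmeticFunction in
theorem sum_log_div_eq_sum_vonMangoldt {k : ℕ} (χ : DirichletCharacter ℂ k) (N : ℕ) :
    ∑ n ∈ Finset.Ioc 0 N, χ (n : ZMod k) * Real.log n / n
      = ∑ m ∈ Finset.Ioc 0 N, χ (m : ZMod k) * vonMangoldt m / m *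
          ∑ j ∈ Finset.Ioc 0 (N / m), χ (j : ZMod k) / j := by
  let f : ArithmeticFunction ℂ := ⟨fun m => χ (m : ZMod k) * vonMangoldt m / m, by simp⟩
  let g : ArithmeticFunction ℂ := ⟨fun j => χ (j : ZMod k) / j, by simp⟩
  have h := sum_Ioc_mul_eq_sum_sum f g N
  have e : ∀ n ∈ Finset.Ioc 0 N, (f * g) n = χ (n : ZMod k) * Real.log n / n := by
    intro n hn
    have hn0 : n ≠ 0 := by have := (Finset.mem_Ioc.1 hn).1; omega
    rw [ArithmeticFunction.mul_apply, ← vonMangoldt_sum,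
      ← Nat.sum_divisorsAntidiagonal (f := fun i _ => vonMangoldt i), Complex.ofReal_sum,
      Finset.mul_sum, Finset.sum_div]
    refine Finset.sum_congr rfl fun x hx => ?_
    obtain ⟨hx, -⟩ := Nat.mem_divisorsAntidiagonal.1 hx
    change χ (x.1 : ZMod k) * vonMangoldt x.1 / x.1 * (χ (x.2 : ZMod k) / x.2) = _
    rw [← hx]
    push_cast
    rw [map_mul]
    have h1 : (x.1 : ℂ) ≠ 0 := by rintro h1; apply hn0; rw [← hx]; simp_all
    have h2 : (x.2 : ℂ) ≠ 0 := by rintro h1; apply hn0; rw [← hx]; simp_all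
    field_simp
  rw [← Finset.sum_congr rfl e, h]
  rfl

open ArithmeticFunction in
/-- Mertens' estimate twisted by a nontrivial character. -/
theorem norm_sum_vonMangoldt_char_div_le {k : ℕ} [NeZero k] {χ : DirichletCharacter ℂ k}
    (hχ : χ ≠ 1) :
    ∃ K : ℝ, ∀ N : ℕ, ‖∑ m ∈ Finset.Ioc 0 N, χ (m : ZMod k) * vonMangoldt m / m‖ ≤ K := by
  obtain ⟨K, hK⟩ := norm_sum_log_div_le hχ
  set L := DirichletCharacter.LFunction χ 1 with hL
  have hL0 : L ≠ 0 := DirichletCharacter.LFunction_apply_one_ne_zero hχ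
  refine ⟨(K + 2 * k * (Real.log 4 + 4)) / ‖L‖, fun N => ?_⟩
  rw [le_div_iff₀ (norm_pos_iff.2 hL0), ← norm_mul, Finset.sum_mul]
  rcases Nat.eq_zero_or_pos N with rfl | hN
  · have : 0 ≤ K := (norm_nonneg _).trans (hK 0)
    have : 0 ≤ Real.log 4 := Real.log_nonneg (by norm_num)
    simp only [Finset.Ioc_self, Finset.sum_empty, norm_zero]
    positivity
  have hN0 : (0 : ℝ) < N := by exact_mod_cast hN
  have e : ∑ m ∈ Finset.Ioc 0 N, χ (m : ZMod k) * vonMangoldt m / m * L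
      = ∑ n ∈ Finset.Ioc 0 N, χ (n : ZMod k) * Real.log n / n
        - ∑ m ∈ Finset.Ioc 0 N, χ (m : ZMod k) * vonMangoldt m / m *
          (∑ j ∈ Finset.Ioc 0 (N / m), χ (j : ZMod k) / j - L) := by
    rw [sum_log_div_eq_sum_vonMangoldt, ← Finset.sum_sub_distrib]
    exact Finset.sum_congr rfl fun m _ => by ring
  rw [e]
  refine (norm_sub_le _ _).trans (add_le_add (hK N) ?_)
  refine (norm_sum_le _ _).trans ?_
  have hpsi : ∑ n ∈ Finset.Ioc 0 N, vonMangoldt n ≤ (Real.log 4 + 4) * N := by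
    simpa [Chebyshev.psi] using Chebyshev.psi_le_const_mul_self (x := N) (by positivity)
  calc _ ≤ ∑ m ∈ Finset.Ioc 0 N, vonMangoldt m * (2 * k / N) := by
        refine Finset.sum_le_sum fun m hm => ?_
        obtain ⟨hm0, hmN⟩ := Finset.mem_Ioc.1 hm
        have hm0' : (0 : ℝ) < m := by exact_mod_cast hm0
        have h1 := norm_sum_range_div_sub_LFunction_one_le hχ (N / m + 1) (Nat.le_add_left _ _)
        have h2 : ∑ j ∈ Finset.Ioc 0 (N / m), χ (j : ZMod k) / j
            = ∑ n ∈ Finset.range (N / m + 1), χ (n : ZMod k) / n := by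
          rw [Finset.sum_range_eq_add_Ico _ (Nat.succ_pos _)]
          simp only [Nat.cast_zero, div_zero, zero_add]
          rfl
        rw [h2, norm_mul, norm_div, norm_mul, Complex.norm_real,
          Real.norm_of_nonneg vonMangoldt_nonneg, Complex.norm_natCast]
        have h3 : (N : ℝ) ≤ m * ((N / m + 1 : ℕ) : ℝ) := by
          exact_mod_cast (Nat.lt_mul_div_succ N hm0).le
        calc _ ≤ 1 * vonMangoldt m / m * (2 * k / ((N / m + 1 : ℕ) : ℝ)) := by
              gcongr
              exact χ.norm_le_one _
          _ = vonMangoldt m * (2 * k / (m * ((N / m + 1 : ℕ) : ℝ))) := by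
              field_simp
          _ ≤ _ := by
              gcongr
    _ = (∑ n ∈ Finset.Ioc 0 N, vonMangoldt n) * (2 * k / N) := by rw [Finset.sum_mul]
    _ ≤ (Real.log 4 + 4) * N * (2 * k / N) := by gcongr
    _ = _ := by field_simp

open ArithmeticFunction in
/-- Mertens' first estimate for the von Mangoldt function. -/
theorem abs_sum_vonMangoldt_div_sub_log_le (N : ℕ) (hN : 1 ≤ N) :
    |∑ m ∈ Finset.Ioc 0 N, vonMangoldt m / m - Real.log N| ≤ Real.log 4 + 4 := by
  have hN0 : (0 : ℝ) < N := by exact_mod_cast hN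
  have hlog4 : 0 ≤ Real.log 4 := Real.log_nonneg (by norm_num)
  have hpsi : ∑ n ∈ Finset.Ioc 0 N, vonMangoldt n ≤ (Real.log 4 + 4) * N := by
    simpa [Chebyshev.psi] using Chebyshev.psi_le_const_mul_self (x := N) (by positivity)
  have hfact : ∑ m ∈ Finset.Ioc 0 N, vonMangoldt m * ((N / m : ℕ) : ℝ)
      = Real.log (N.factorial) := by
    rw [← sum_Ioc_mul_zeta_eq_sum, vonMangoldt_mul_zeta,
      ← Finset.prod_range_add_one_eq_factorial, Nat.cast_prod,
      Real.log_prod fun i _ => by positivity, Finset.range_eq_Ico,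
      Finset.sum_Ico_add' (fun i : ℕ => Real.log i) 0 N 1]
    rfl
  have hup : Real.log (N.factorial) ≤ N * Real.log N := by
    rw [← Real.log_pow]
    exact Real.log_le_log (by positivity) (by exact_mod_cast Nat.factorial_le_pow N)
  have hlow : N * Real.log N - N ≤ Real.log (N.factorial) := by
    have h := Real.pow_div_factorial_le_exp (x := (N : ℝ)) hN0.le N
    have h2 := Real.log_le_log (by positivity) h
    rw [Real.log_exp, Real.log_div (by positivity) (by positivity), Real.log_pow] at h2
    linarith
  have h1 : Real.log (N.factorial) ≤ N * ∑ m ∈ Finset.Ioc 0 N, vonMangoldt m / m := by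
    rw [← hfact, Finset.mul_sum]
    refine Finset.sum_le_sum fun m hm => ?_
    calc _ ≤ vonMangoldt m * ((N : ℝ) / m) :=
          mul_le_mul_of_nonneg_left Nat.cast_div_le vonMangoldt_nonneg
      _ = _ := by ring
  have h2 : N * ∑ m ∈ Finset.Ioc 0 N, vonMangoldt m / m ≤
      Real.log (N.factorial) + (Real.log 4 + 4) * N := by
    refine le_trans ?_ (add_le_add_right hpsi _)
    rw [← hfact, Finset.mul_sum, ← Finset.sum_add_distrib]
    refine Finset.sum_le_sum fun m hm => ?_
    have hm0 : 0 < m := (Finset.mem_Ioc.1 hm).1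
    have hm0' : (0 : ℝ) < m := by exact_mod_cast hm0
    have h3 : (N : ℝ) ≤ m * ((N / m + 1 : ℕ) : ℝ) := by
      exact_mod_cast (Nat.lt_mul_div_succ N hm0).le
    have h4 : (N : ℝ) / m ≤ ((N / m : ℕ) : ℝ) + 1 := by
      rw [div_le_iff₀ hm0']; push_cast at h3 ⊢; linarith
    have := mul_le_mul_of_nonneg_left h4 (vonMangoldt_nonneg (n := m))
    calc _ = vonMangoldt m * ((N : ℝ) / m) := by ring
      _ ≤ _ := by linarith
  rw [abs_le]
  constructor
  · have : N * (Real.log N - 1) ≤ N * ∑ m ∈ Finset.Ioc 0 N, vonMangoldt m / m := by linarith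
    have := le_of_mul_le_mul_left this hN0
    linarith
  · have : N * ∑ m ∈ Finset.Ioc 0 N, vonMangoldt m / m
        ≤ N * (Real.log N + (Real.log 4 + 4)) := by linarith
    have := le_of_mul_le_mul_left this hN0
    linarith

open ArithmeticFunction ArithmeticFunction.vonMangoldt in
theorem exists_sum_vonMangoldt_nonprime_div_le :
    ∃ K : ℝ, ∀ s : Finset ℕ, ∑ n ∈ s with ¬ n.Prime, ArithmeticFunction.vonMangoldt n / n ≤ K := by
  have h := summable_residueClass_non_primes_div (0 : ZMod 1)
  refine ⟨∑' n : ℕ, (if n.Prime then 0 else residueClass (0 : ZMod 1) n) / n, fun s => ?_⟩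
  refine le_trans (le_of_eq ?_) (h.sum_le_tsum s fun n _ => ?_)
  · rw [Finset.sum_filter]
    refine Finset.sum_congr rfl fun n _ => ?_
    have : residueClass (0 : ZMod 1) n = ArithmeticFunction.vonMangoldt n :=
      Set.indicator_of_mem (by simp [eq_iff_true_of_subsingleton]) _
    rw [this]
    split_ifs <;> simp_all
  · split_ifs
    · simp
    · exact div_nonneg (residueClass_nonneg _ _) (Nat.cast_nonneg _)

open ArithmeticFunction in
/-- The trivial-character case of Mertens' estimate. -/
theorem exists_norm_sum_vonMangoldt_one_div_sub_log_le (k : ℕ) [NeZero k] :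
    ∃ K : ℝ, ∀ N : ℕ, 1 ≤ N →
      ‖∑ m ∈ Finset.Ioc 0 N, (1 : DirichletCharacter ℂ k) (m : ZMod k) * vonMangoldt m / m
        - Real.log N‖ ≤ K := by
  obtain ⟨K, hK⟩ := exists_sum_vonMangoldt_nonprime_div_le
  refine ⟨Real.log 4 + 4 + (K + ∑ p ∈ k.primeFactors, vonMangoldt p / p), fun N hN => ?_⟩
  have e : ∑ m ∈ Finset.Ioc 0 N, (1 : DirichletCharacter ℂ k) (m : ZMod k) * vonMangoldt m / m
      = ((∑ m ∈ Finset.Ioc 0 N, vonMangoldt m / m : ℝ) : ℂ)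
        - ((∑ m ∈ Finset.Ioc 0 N with ¬ IsUnit ((m : ℕ) : ZMod k), vonMangoldt m / m : ℝ) : ℂ) := by
    rw [Finset.sum_filter, ← Complex.ofReal_sub, ← Finset.sum_sub_distrib, Complex.ofReal_sum]
    refine Finset.sum_congr rfl fun m _ => ?_
    by_cases h : IsUnit (m : ZMod k)
    · simp [h, MulChar.one_apply h]
    · simp [h, MulChar.map_nonunit]
  rw [e, sub_right_comm, ← Complex.ofReal_sub]
  refine (norm_sub_le _ _).trans ?_
  rw [Complex.norm_real, Complex.norm_real]
  refine add_le_add (abs_sum_vonMangoldt_div_sub_log_le N hN) ?_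
  have hnn : ∀ m : ℕ, 0 ≤ vonMangoldt m / m := fun m =>
    div_nonneg vonMangoldt_nonneg (Nat.cast_nonneg _)
  rw [Real.norm_of_nonneg (Finset.sum_nonneg fun m _ => hnn m)]
  calc _ ≤ ∑ m ∈ (Finset.Ioc 0 N).filter (fun m => ¬ m.Prime) ∪ k.primeFactors,
          vonMangoldt m / m := by
        refine Finset.sum_le_sum_of_subset_of_nonneg ?_ fun m _ _ => hnn m
        intro m hm
        rw [Finset.mem_filter, ZMod.isUnit_iff_coprime] at hm
        rw [Finset.mem_union, Finset.mem_filter]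
        by_cases hp : m.Prime
        · right
          rw [Nat.mem_primeFactors]
          exact ⟨hp, not_not.1 (mt hp.coprime_iff_not_dvd.2 hm.2), NeZero.ne k⟩
        · exact Or.inl ⟨hm.1, hp⟩
    _ ≤ ∑ m ∈ (Finset.Ioc 0 N).filter (fun m => ¬ m.Prime), vonMangoldt m / m
          + ∑ p ∈ k.primeFactors, vonMangoldt p / p := by
        rw [← Finset.sum_union_inter]
        exact le_add_of_nonneg_right (Finset.sum_nonneg fun m _ => hnn m)
    _ ≤ _ := by gcongr; exact hK _

open ArithmeticFunction ArithmeticFunction.vonMangoldt in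
/-- Mertens' estimate for primes congruent to `1` modulo `k`. -/
theorem exists_abs_sum_log_div_prime_one_mod_sub_le (k : ℕ) [NeZero k] :
    ∃ K : ℝ, ∀ N : ℕ, 1 ≤ N →
      |∑ p ∈ Finset.Ioc 0 N with p.Prime ∧ ((p : ℕ) : ZMod k) = 1, Real.log p / p
        - Real.log N / k.totient| ≤ K := by
  classical
  have hφ : (0 : ℝ) < k.totient := by exact_mod_cast Nat.totient_pos.2 (NeZero.pos k)
  obtain ⟨K₀, hK₀⟩ := exists_sum_vonMangoldt_nonprime_div_le
  have h : ∀ χ : DirichletCharacter ℂ k, ∃ K : ℝ, ∀ N : ℕ, 1 ≤ N →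
      ‖∑ m ∈ Finset.Ioc 0 N, χ (m : ZMod k) * vonMangoldt m / m
        - if χ = 1 then (Real.log N : ℂ) else 0‖ ≤ K := by
    intro χ
    by_cases hχ : χ = 1
    · subst hχ
      simpa using exists_norm_sum_vonMangoldt_one_div_sub_log_le k
    · obtain ⟨K, hK⟩ := norm_sum_vonMangoldt_char_div_le hχ
      exact ⟨K, fun N _ => by simpa [hχ] using hK N⟩
  choose K hK using h
  refine ⟨(k.totient : ℝ)⁻¹ * ∑ χ, K χ + K₀, fun N hN => ?_⟩
  have h1 : |∑ n ∈ Finset.Ioc 0 N, residueClass (1 : ZMod k) n / n - Real.log N / k.totient|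
      ≤ (k.totient : ℝ)⁻¹ * ∑ χ, K χ := by
    rw [← Real.norm_eq_abs, ← Complex.norm_real]
    have e : ((∑ n ∈ Finset.Ioc 0 N, residueClass (1 : ZMod k) n / n
          - Real.log N / k.totient : ℝ) : ℂ)
        = (k.totient : ℂ)⁻¹ * ∑ χ : DirichletCharacter ℂ k,
          (∑ m ∈ Finset.Ioc 0 N, χ (m : ZMod k) * vonMangoldt m / m
            - if χ = 1 then (Real.log N : ℂ) else 0) := by
      rw [Finset.sum_sub_distrib, Finset.sum_ite_eq', if_pos (Finset.mem_univ _), mul_sub,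
        Finset.sum_comm, Finset.mul_sum]
      push_cast
      congr 1
      · refine Finset.sum_congr rfl fun n _ => ?_
        rw [residueClass_apply isUnit_one, Finset.mul_sum, Finset.mul_sum, Finset.sum_div]
        refine Finset.sum_congr rfl fun χ _ => ?_
        rw [show (1 : ZMod k)⁻¹ = 1 from ZMod.inv_one k, map_one]
        ring
      · ring
    rw [e, norm_mul]
    rw [norm_inv, Complex.norm_natCast]
    gcongr
    exact (norm_sum_le _ _).trans (Finset.sum_le_sum fun χ _ => hK χ N hN)
  have hnn : ∀ m : ℕ, 0 ≤ residueClass (1 : ZMod k) m / m := fun m =>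
    div_nonneg (residueClass_nonneg _ _) (Nat.cast_nonneg _)
  have h2 : ∑ n ∈ Finset.Ioc 0 N, residueClass (1 : ZMod k) n / n
      = ∑ p ∈ Finset.Ioc 0 N with p.Prime ∧ ((p : ℕ) : ZMod k) = 1, Real.log p / p
        + ∑ n ∈ Finset.Ioc 0 N with ¬ n.Prime, residueClass (1 : ZMod k) n / n := by
    rw [← Finset.sum_filter_add_sum_filter_not _ Nat.Prime, ← Finset.filter_filter]
    congr 1
    rw [Finset.sum_filter (s := Finset.filter Nat.Prime _)]
    refine Finset.sum_congr rfl fun p hp => ?_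
    by_cases h : (p : ZMod k) = 1
    · simp [residueClass, h, vonMangoldt_apply_prime (Finset.mem_filter.1 hp).2]
    · simp [residueClass, h]
  have h3 : ∑ n ∈ Finset.Ioc 0 N with ¬ n.Prime, residueClass (1 : ZMod k) n / n ≤ K₀ :=
    (Finset.sum_le_sum fun n _ => div_le_div_of_nonneg_right (residueClass_le _ _)
      (Nat.cast_nonneg _)).trans (hK₀ _)
  have h4 : 0 ≤ ∑ n ∈ Finset.Ioc 0 N with ¬ n.Prime, residueClass (1 : ZMod k) n / n :=
    Finset.sum_nonneg fun n _ => hnn n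
  rw [h2] at h1
  rw [abs_le] at h1 ⊢
  constructor <;> linarith [h1.1, h1.2]

/-- Chebyshev's lower bound for primes congruent to `1` modulo `k`. -/
theorem exists_card_primes_one_mod_ge (k : ℕ) (hk : 2 ≤ k) :
    ∃ c : ℝ, 0 < c ∧ ∀ᶠ y : ℝ in atTop,
      c * (y / Real.log y) ≤ ((Finset.Ioc 0 ⌊y⌋₊).filter fun p => p.Prime ∧ p % k = 1).card := by
  have : NeZero k := ⟨by omega⟩
  have hφ : (0 : ℝ) < k.totient := by exact_mod_cast Nat.totient_pos.2 (NeZero.pos k)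
  obtain ⟨K, hK⟩ := exists_abs_sum_log_div_prime_one_mod_sub_le k
  have hK0 : 0 ≤ K := (abs_nonneg _).trans (hK 1 le_rfl)
  obtain ⟨A, hA⟩ := exists_nat_gt (Real.exp ((2 * K + 1) * k.totient))
  have hA0 : (0 : ℝ) < A := (Real.exp_pos _).trans hA
  have hA1 : 1 ≤ A := by exact_mod_cast hA0
  have hlogA : 2 * K + 1 ≤ Real.log A / k.totient := by
    rw [le_div_iff₀ hφ, Real.le_log_iff_exp_le hA0]
    exact hA.le
  refine ⟨1 / (2 * A), by positivity, ?_⟩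
  filter_upwards [eventually_ge_atTop (2 * A + 2 : ℝ)] with y hy
  have hy0 : 0 < y := by linarith
  set N := ⌊y / A⌋₊ with hN
  have hNle : (N : ℝ) ≤ y / A := Nat.floor_le (by positivity)
  have hNge : y / A < N + 1 := Nat.lt_floor_add_one _
  have hyA : 2 ≤ y / A := by rw [le_div_iff₀ hA0]; linarith
  have hN1 : 1 ≤ N := Nat.le_floor (by push_cast; linarith)
  have hN0 : (0 : ℝ) < N := by exact_mod_cast hN1
  have hAN : A * N ≤ ⌊y⌋₊ := by
    refine Nat.le_floor ?_
    push_cast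
    rw [le_div_iff₀ hA0] at hNle
    linarith
  have h1 := abs_le.1 (hK N hN1)
  have h2 := abs_le.1 (hK (A * N) (Nat.one_le_iff_ne_zero.2 (by positivity)))
  push_cast at h2
  rw [Real.log_mul hA0.ne' hN0.ne', add_div] at h2
  have hlogy : 0 < Real.log y := Real.log_pos (by linarith)
  set S := (Finset.Ioc N (A * N)).filter fun p : ℕ => p.Prime ∧ (p : ZMod k) = 1 with hS
  have hsplit : ∑ p ∈ Finset.Ioc 0 (A * N) with p.Prime ∧ ((p : ℕ) : ZMod k) = 1, Real.log p / p
      = ∑ p ∈ Finset.Ioc 0 N with p.Prime ∧ ((p : ℕ) : ZMod k) = 1, Real.log p / p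
        + ∑ p ∈ S, Real.log p / p := by
    rw [Finset.sum_filter, Finset.sum_filter, hS, Finset.sum_filter]
    exact (Finset.sum_Ioc_consecutive _ (Nat.zero_le N) (Nat.le_mul_of_pos_left N hA1)).symm
  have h3 : 1 ≤ ∑ p ∈ S, Real.log p / p := by linarith [h1.2, h2.1]
  have h4 : ∑ p ∈ S, Real.log p / p ≤ S.card * (Real.log y / N) := by
    rw [← nsmul_eq_mul]
    refine Finset.sum_le_card_nsmul _ _ _ fun p hp => ?_
    obtain ⟨hp1, hp2⟩ := Finset.mem_Ioc.1 (Finset.mem_filter.1 hp).1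
    have hp0 : (0 : ℝ) < p := by exact_mod_cast (by omega : 0 < p)
    have hpy : (p : ℝ) ≤ y := by
      refine le_trans ?_ (Nat.floor_le hy0.le)
      exact_mod_cast hp2.trans hAN
    have : (N : ℝ) ≤ p := by exact_mod_cast hp1.le
    gcongr
  have h5 : S.card ≤ ((Finset.Ioc 0 ⌊y⌋₊).filter fun p => p.Prime ∧ p % k = 1).card := by
    refine Finset.card_le_card fun p hp => ?_
    rw [hS, Finset.mem_filter, Finset.mem_Ioc] at hp
    rw [Finset.mem_filter, Finset.mem_Ioc]
    refine ⟨⟨by omega, hp.1.2.trans hAN⟩, hp.2.1, ?_⟩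
    have h := (ZMod.natCast_eq_natCast_iff' p 1 k).1 (by simpa using hp.2.2)
    rwa [Nat.mod_eq_of_lt (by omega : 1 < k)] at h
  have h6 : (N : ℝ) / Real.log y ≤ S.card := by
    rw [div_le_iff₀ hlogy]
    have := h3.trans h4
    rwa [← mul_div_assoc, le_div_iff₀ hN0, one_mul] at this
  calc 1 / (2 * A) * (y / Real.log y) = (y / A / 2) / Real.log y := by field_simp
    _ ≤ N / Real.log y := by gcongr; linarith
    _ ≤ S.card := h6
    _ ≤ _ := by exact_mod_cast h5

theorem eval_linForm {R : Type*} [CommRing R] {n : ℕ} (c x : Fin n → R) :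
    MvPolynomial.eval x (linForm c) = ∑ i, c i * x i := by
  simp [linForm]

theorem map_linForm {R S : Type*} [CommRing R] [CommRing S] (φ : R →+* S) {n : ℕ}
    (c : Fin n → R) : (linForm c).map φ = linForm fun i => φ (c i) := by
  simp [linForm]

theorem coeff_linForm {R : Type*} [CommRing R] {n : ℕ} (c : Fin n → R) (i : Fin n) :
    MvPolynomial.coeff (Finsupp.single i 1) (linForm c) = c i := by
  simp only [linForm, MvPolynomial.coeff_sum, MvPolynomial.coeff_C_mul, MvPolynomial.coeff_X]
  rw [Finset.sum_eq_single i]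
  · simp
  · intro j _ hj
    simp [Finsupp.single_left_inj, hj]
  · simp

theorem linForm_injective {R : Type*} [CommRing R] {n : ℕ} :
    Function.Injective (linForm : (Fin n → R) → MvPolynomial (Fin n) R) := fun c c' h =>
  funext fun i => by rw [← coeff_linForm c i, h, coeff_linForm]

theorem linForm_sub_smul {R : Type*} [CommRing R] {n : ℕ} (c c' : Fin n → R) (u v : R) :
    linForm (fun i => u * c i - v * c' i) = C u * linForm c - C v * linForm c' := by
  simp only [linForm, Finset.mul_sum, ← Finset.sum_sub_distrib, map_sub, map_mul]
  exact Finset.sum_congr rfl fun i _ => by ring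

/-- Non-vanishing of the discriminant forces any two linear factors to be non-proportional. -/
theorem eq_zero_of_discProd_ne_zero {n d : ℕ} (hn : 2 ≤ n) (hd : n < d) {L : Fin d → Fin n → ℂ}
    (hΔ : discProd L ≠ 0) {i j : Fin d} (hij : i ≠ j) {u v : ℂ}
    (h : ∀ m, u * L i m - v * L j m = 0) : u = 0 := by
  obtain ⟨s, hs, hcard⟩ : ∃ s : Finset (Fin d), {i, j} ⊆ s ∧ s.card = n :=
    Finset.exists_superset_card_eq (by rw [Finset.card_pair hij]; exact hn) (by simpa using hd.le)
  let g := s.orderEmbOfFin hcard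
  have hg : StrictMono g := (s.orderEmbOfFin hcard).strictMono
  have hdet : Matrix.det (Matrix.of fun i j => L (g i) j) ≠ 0 := by
    intro h0
    apply hΔ
    rw [discProd, finprod_mem_eq_finite_toFinset_prod _ (Set.toFinite _)]
    exact Finset.prod_eq_zero ((Set.Finite.mem_toFinset _).2 hg) (by simpa using h0)
  have hi : i ∈ Set.range g := by
    rw [Finset.range_orderEmbOfFin]; exact hs (by simp)
  have hj : j ∈ Set.range g := by
    rw [Finset.range_orderEmbOfFin]; exact hs (by simp)
  obtain ⟨i', rfl⟩ := hi
  obtain ⟨j', rfl⟩ := hj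
  have hij' : i' ≠ j' := fun h => hij (by rw [h])
  have hvec : Matrix.vecMul (fun m => if m = i' then u else if m = j' then -v else 0)
      (Matrix.of fun i j => L (g i) j) = 0 := by
    ext m
    have e : ∀ x, (if x = i' then u else if x = j' then -v else 0) * L (g x) m
        = (if x = i' then u * L (g x) m else 0) + (if x = j' then -v * L (g x) m else 0) := by
      intro x
      by_cases h1 : x = i'
      · subst h1; simp [hij']
      · simp [h1]
    simp only [Matrix.vecMul, dotProduct, Matrix.of_apply, e, Finset.sum_add_distrib,
      Finset.sum_ite_eq', Finset.mem_univ, if_true, Pi.zero_apply]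
    linear_combination h m
  have h1 := Matrix.eq_zero_of_vecMul_eq_zero hdet hvec
  simpa using congrFun h1 i'

theorem exists_int_eval_ne_zero {n : ℕ} {P : MvPolynomial (Fin n) ℂ} (hP : P ≠ 0) :
    ∃ x : Fin n → ℤ, MvPolynomial.eval (fun i => (x i : ℂ)) P ≠ 0 := by
  by_contra! h
  refine hP (MvPolynomial.funext_set (fun _ => Set.range ((↑) : ℤ → ℂ))
    (fun _ => Set.infinite_range_of_injective Int.cast_injective) fun x hx => ?_)
  have hx' : ∀ i, ∃ z : ℤ, (z : ℂ) = x i := fun i => hx i (Set.mem_univ _)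
  choose z hz using hx'
  rw [map_zero, ← h z]
  congr
  exact funext fun i => (hz i).symm

/-- There is an integral line `aX + b` on which the linear factors of `F` are nonconstant with
pairwise distinct zeros. -/
theorem exists_line {n d : ℕ} (hn : 2 ≤ n) (hd : n < d) {L : Fin d → Fin n → ℂ}
    (hΔ : discProd L ≠ 0) {F : MvPolynomial (Fin n) ℤ} (hF0 : F ≠ 0)
    (hF : F.map (Int.castRingHom ℂ) = ∏ j, linForm (L j)) :
    ∃ a b : Fin n → ℤ, MvPolynomial.eval a F ≠ 0 ∧ ∀ i j, i ≠ j →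
      (∑ m, L j m * a m) * (∑ m, L i m * b m) ≠ (∑ m, L i m * a m) * (∑ m, L j m * b m) := by
  have hP : F.map (Int.castRingHom ℂ) ≠ 0 := by
    rwa [Ne, map_eq_zero_iff _ (MvPolynomial.map_injective _ Int.cast_injective)]
  obtain ⟨a, ha⟩ := exists_int_eval_ne_zero hP
  have hla : ∀ j, ∑ m, L j m * (a m : ℂ) ≠ 0 := by
    intro j h0
    apply ha
    rw [hF, map_prod]
    exact Finset.prod_eq_zero (Finset.mem_univ j) (by rw [eval_linForm, h0])
  have hne : ∏ q : Fin d × Fin d with q.1 ≠ q.2,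
      linForm (fun m => (∑ m, L q.2 m * (a m : ℂ)) * L q.1 m
        - (∑ m, L q.1 m * (a m : ℂ)) * L q.2 m) ≠ 0 := by
    refine Finset.prod_ne_zero_iff.2 fun q hq h0 => ?_
    refine hla q.2 (eq_zero_of_discProd_ne_zero hn hd hΔ (Finset.mem_filter.1 hq).2
      (v := ∑ m, L q.1 m * (a m : ℂ)) fun m => ?_)
    rw [← coeff_linForm (fun m => _ * L q.1 m - _ * L q.2 m) m, h0, MvPolynomial.coeff_zero]
  obtain ⟨b, hb⟩ := exists_int_eval_ne_zero hne
  refine ⟨a, b, fun h0 => ha ?_, fun i j hij h0 => hb ?_⟩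
  · rw [MvPolynomial.eval_map]
    exact (MvPolynomial.eval₂_comp (Int.castRingHom ℂ) a F).symm.trans (by rw [h0, map_zero])
  · rw [map_prod]
    refine Finset.prod_eq_zero (i := (i, j)) (by simpa using hij) ?_
    rw [linForm_sub_smul]
    simp only [map_sub, map_mul, MvPolynomial.eval_C, eval_linForm]
    rw [h0, sub_self]

theorem totalDegree_linForm_le {R : Type*} [CommRing R] {n : ℕ} (c : Fin n → R) :
    (linForm c).totalDegree ≤ 1 := by
  refine (MvPolynomial.totalDegree_finsetSum_le fun i _ => ?_)
  refine (MvPolynomial.totalDegree_mul _ _).trans ?_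
  rw [MvPolynomial.totalDegree_C, zero_add]
  by_cases h : Nontrivial R
  · rw [MvPolynomial.totalDegree_X]
  · rw [not_nontrivial_iff_subsingleton] at h
    rw [Subsingleton.elim (X i : MvPolynomial (Fin n) R) 0]
    simp

theorem totalDegree_linForm {R : Type*} [CommRing R] {n : ℕ} {c : Fin n → R} (hc : c ≠ 0) :
    (linForm c).totalDegree = 1 := by
  refine le_antisymm (totalDegree_linForm_le c) ?_
  obtain ⟨i, hi⟩ := Function.ne_iff.1 hc
  have := MvPolynomial.le_totalDegree (p := linForm c) (s := Finsupp.single i 1)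
    (by rwa [MvPolynomial.mem_support_iff, coeff_linForm])
  simpa using this

theorem prime_linForm {E : Type*} [Field E] {n : ℕ} {c : Fin n → E} (hc : c ≠ 0) :
    Prime (linForm c) := by
  refine (MvPolynomial.irreducible_of_totalDegree_eq_one (totalDegree_linForm hc)
    fun x hx => ?_).prime
  obtain ⟨i, hi⟩ := Function.ne_iff.1 hc
  have := hx (Finsupp.single i 1)
  rw [coeff_linForm] at this
  exact IsUnit.mk0 x (ne_zero_of_dvd_ne_zero hi this)

/-- Dividing linear forms which agree, and do not vanish, at some point are equal. -/
theorem eq_of_linForm_dvd_linForm {E : Type*} [Field E] {n : ℕ} {c c' a : Fin n → E}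
    (hc : ∑ m, c m * a m = 1) (hc' : ∑ m, c' m * a m = 1) (h : linForm c ∣ linForm c') :
    c = c' := by
  have h0 : ∀ {e : Fin n → E}, ∑ m, e m * a m = 1 → e ≠ 0 := by
    rintro e he rfl
    simp at he
  obtain ⟨q, hq⟩ := h
  have hq0 : q ≠ 0 := by
    rintro rfl
    rw [mul_zero] at hq
    have := totalDegree_linForm (h0 hc')
    rw [hq] at this
    simp at this
  have hc0 : linForm c ≠ 0 := (prime_linForm (h0 hc)).ne_zero
  have hdeg := congrArg MvPolynomial.totalDegree hq
  rw [MvPolynomial.totalDegree_mul_of_isDomain hc0 hq0, totalDegree_linForm (h0 hc),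
    totalDegree_linForm (h0 hc')] at hdeg
  rw [MvPolynomial.totalDegree_eq_zero_iff_eq_C.1 (by omega : q.totalDegree = 0)] at hq
  have he := congrArg (MvPolynomial.eval a) hq
  rw [map_mul, eval_linForm, eval_linForm, hc, hc', MvPolynomial.eval_C, one_mul] at he
  rw [← he, map_one, mul_one] at hq
  exact linForm_injective hq.symm

/-- The normalised linear factors of an irreducible rational form take conjugate values at every
rational point where they are pairwise distinct. -/
theorem aeval_minpoly_eq_zero_of_irreducible {E : Type*} [Field E] [Algebra ℚ E] [IsGalois ℚ E]
    {n d : ℕ} {P : MvPolynomial (Fin n) ℚ} (hP : Irreducible P) {M : Fin d → Fin n → E} {c : ℚ}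
    (hPM : P.map (algebraMap ℚ E) = C (algebraMap ℚ E c) * ∏ j, linForm (M j))
    (a b : Fin n → ℚ) (ha : ∀ j, ∑ m, M j m * algebraMap ℚ E (a m) = 1)
    (hθ : Function.Injective fun j => ∑ m, M j m * algebraMap ℚ E (b m)) (i j : Fin d) :
    Polynomial.aeval (∑ m, M j m * algebraMap ℚ E (b m))
      (minpoly ℚ (∑ m, M i m * algebraMap ℚ E (b m))) = 0 := by
  classical
  set θ : Fin d → E := fun j => ∑ m, M j m * algebraMap ℚ E (b m) with hθdef
  change Polynomial.aeval (θ j) (minpoly ℚ (θ i)) = 0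
  have hc : algebraMap ℚ E c ≠ 0 := by
    intro h
    rw [h, map_zero, zero_mul, map_eq_zero_iff _
      (MvPolynomial.map_injective _ (algebraMap ℚ E).injective)] at hPM
    exact hP.ne_zero hPM
  have h0 : ∀ {e : Fin n → E}, ∑ m, e m * algebraMap ℚ E (a m) = 1 → e ≠ 0 := by
    rintro e he rfl
    simp at he
  have hsa : ∀ (σ : E ≃ₐ[ℚ] E) (e : Fin n → E) (x : Fin n → ℚ),
      ∑ m, σ (e m) * algebraMap ℚ E (x m) = σ (∑ m, e m * algebraMap ℚ E (x m)) := by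
    intro σ e x
    rw [map_sum]
    exact Finset.sum_congr rfl fun m _ => by rw [map_mul, AlgEquiv.commutes]
  have hperm : ∀ (σ : E ≃ₐ[ℚ] E) (i : Fin d), ∃ j, (fun m => σ (M i m)) = M j := by
    intro σ i
    have h1 : ∑ m, σ (M i m) * algebraMap ℚ E (a m) = 1 := by rw [hsa, ha, map_one]
    have h2 : linForm (fun m => σ (M i m)) ∣ C (algebraMap ℚ E c) * ∏ j, linForm (M j) := by
      have : linForm (M i) ∣ P.map (algebraMap ℚ E) :=
        hPM ▸ (Finset.dvd_prod_of_mem _ (Finset.mem_univ i)).mul_left _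
      have := map_dvd (MvPolynomial.map (σ : E →+* E)) this
      rw [map_linForm, MvPolynomial.map_map] at this
      rw [← hPM]
      rwa [show (σ : E →+* E).comp (algebraMap ℚ E) = algebraMap ℚ E from
        Subsingleton.elim _ _] at this
    have hpr := prime_linForm (h0 h1)
    rcases hpr.dvd_or_dvd h2 with h3 | h3
    · exact absurd (isUnit_of_dvd_unit h3 ((IsUnit.mk0 _ hc).map C)) hpr.not_isUnit
    · obtain ⟨j, -, hj⟩ := (hpr.dvd_finsetProd_iff _).1 h3
      exact ⟨j, eq_of_linForm_dvd_linForm h1 (ha j) hj⟩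
  choose π hπ using hperm
  have hMinj : Function.Injective M := fun i j h => hθ (by simp only [hθdef, h])
  have hπinj : ∀ σ, Function.Injective (π σ) := by
    intro σ i j hij
    apply hMinj
    have := (hπ σ i).trans ((congrArg M hij).trans (hπ σ j).symm)
    exact funext fun m => σ.injective (congrFun this m)
  have hπθ : ∀ σ i, θ (π σ i) = σ (θ i) := by
    intro σ i
    simp only [hθdef, ← hsa, ← hπ]
  have hdesc : ∀ T : Finset (Fin d), (∀ σ, ∀ i ∈ T, π σ i ∈ T) →
      ∃ Q : MvPolynomial (Fin n) ℚ, Q.map (algebraMap ℚ E) = ∏ j ∈ T, linForm (M j) := by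
    intro T hT
    have hfix : ∀ σ : E ≃ₐ[ℚ] E, (∏ j ∈ T, linForm (M j)).map (σ : E →+* E)
        = ∏ j ∈ T, linForm (M j) := by
      intro σ
      rw [map_prod]
      refine Finset.prod_nbij (π σ) (hT σ) (hπinj σ).injOn ?_ fun i _ => ?_
      · exact Finset.surjOn_of_injOn_of_card_le _ (hT σ) (hπinj σ).injOn le_rfl
      · rw [map_linForm, ← hπ]
        rfl
    have : ∏ j ∈ T, linForm (M j) ∈ Set.range (MvPolynomial.map (σ := Fin n) (algebraMap ℚ E)) := by
      rw [MvPolynomial.mem_range_map_iff_coeffs_subset]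
      intro x hx
      obtain ⟨s, -, rfl⟩ := MvPolynomial.mem_coeffs_iff.1 hx
      rw [InfiniteGalois.mem_range_algebraMap_iff_fixed]
      intro σ
      have := congrArg (MvPolynomial.coeff s) (hfix σ)
      rwa [MvPolynomial.coeff_map] at this
    exact this
  let S := Finset.univ.filter fun j => Polynomial.aeval (θ j) (minpoly ℚ (θ i)) = 0
  have hS : ∀ σ j, π σ j ∈ S ↔ j ∈ S := by
    intro σ j
    simp only [S, Finset.mem_filter, Finset.mem_univ, true_and, hπθ]
    rw [← AlgEquiv.coe_toAlgHom, Polynomial.aeval_algHom_apply, AlgEquiv.coe_toAlgHom,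
      map_eq_zero_iff _ σ.injective]
  obtain ⟨Q₁, hQ₁⟩ := hdesc S fun σ i hi => (hS σ i).2 hi
  obtain ⟨Q₂, hQ₂⟩ := hdesc Sᶜ fun σ i hi => by
    rw [Finset.mem_compl] at hi ⊢
    rwa [hS]
  have hfac : P = Q₁ * (C c * Q₂) := by
    apply MvPolynomial.map_injective _ (algebraMap ℚ E).injective
    rw [hPM, map_mul, map_mul, hQ₁, hQ₂, MvPolynomial.map_C,
      ← Finset.prod_mul_prod_compl S (fun j => linForm (M j))]
    ring
  have hunit : ∀ {Q : MvPolynomial (Fin n) ℚ} {T : Finset (Fin d)} {j : Fin d}, IsUnit Q →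
      Q.map (algebraMap ℚ E) = ∏ j ∈ T, linForm (M j) → j ∉ T := by
    intro Q T j hQ hQT hj
    have h1 := (hQ.map (MvPolynomial.map (algebraMap ℚ E))).map (MvPolynomial.eval (0 : Fin n → E))
    rw [hQT, map_prod, Finset.prod_eq_zero hj (by rw [eval_linForm]; simp)] at h1
    exact not_isUnit_zero h1
  rcases hP.isUnit_or_isUnit hfac with h | h
  · exact absurd (by simp [S] : i ∈ S) (hunit h hQ₁)
  · have := hunit (j := j) (isUnit_of_mul_isUnit_right h) hQ₂
    rw [Finset.mem_compl, not_not] at this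
    exact (Finset.mem_filter.1 this).2

/-- The restriction of `F` to the line `aX + b`. -/
def restrictLine {R : Type*} [CommRing R] {n : ℕ} (a b : Fin n → R) :
    MvPolynomial (Fin n) R →ₐ[R] Polynomial R :=
  MvPolynomial.aeval fun i => Polynomial.C (a i) * Polynomial.X + Polynomial.C (b i)

theorem map_restrictLine {R S : Type*} [CommRing R] [CommRing S] (φ : R →+* S) {n : ℕ}
    (a b : Fin n → R) (F : MvPolynomial (Fin n) R) :
    (restrictLine a b F).map φ =
      restrictLine (fun i => φ (a i)) (fun i => φ (b i)) (F.map φ) := by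
  have : (Polynomial.mapRingHom φ).comp (restrictLine a b).toRingHom =
      (restrictLine (fun i => φ (a i)) (fun i => φ (b i))).toRingHom.comp
        (MvPolynomial.map φ) := by
    refine MvPolynomial.ringHom_ext (fun r => ?_) fun i => ?_
    · simp [restrictLine]
    · simp [restrictLine]
  exact congrArg (fun f => f F) this

theorem restrictLine_linForm {R : Type*} [CommRing R] {n : ℕ} (a b c : Fin n → R) :
    restrictLine a b (linForm c) =
      Polynomial.C (∑ i, c i * a i) * Polynomial.X + Polynomial.C (∑ i, c i * b i) := by
  simp only [restrictLine, linForm, map_sum, map_mul, MvPolynomial.aeval_X, MvPolynomial.aeval_C,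
    Finset.sum_mul, ← Finset.sum_add_distrib, Polynomial.algebraMap_eq]
  exact Finset.sum_congr rfl fun i _ => by ring

theorem eval_map_intCast {R : Type*} [CommRing R] {n : ℕ} (F : MvPolynomial (Fin n) ℤ)
    (a : Fin n → ℤ) :
    MvPolynomial.eval (fun i => (a i : R)) (F.map (Int.castRingHom R))
      = ((MvPolynomial.eval a F : ℤ) : R) := by
  rw [MvPolynomial.eval_map]
  exact (MvPolynomial.eval₂_comp (Int.castRingHom R) a F).symm

/-- On a line where its linear factors have distinct zeros, an irreducible decomposable form
is a multiple of an irreducible monic integral polynomial. -/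
theorem exists_minpoly_of_restrictLine {E : Type*} [Field E] [Algebra ℚ E] [IsGalois ℚ E]
    {n d : ℕ} (hd : 0 < d) {F : MvPolynomial (Fin n) ℤ} {L' : Fin d → Fin n → E}
    (hLint : ∀ j m, IsIntegral ℤ (L' j m)) (hFE : F.map (Int.castRingHom E) = ∏ j, linForm (L' j))
    (hirr : Irreducible (F.map (Int.castRingHom ℚ))) {a b₀ : Fin n → ℤ}
    (ha : MvPolynomial.eval a F ≠ 0)
    (hb : ∀ i j, i ≠ j → (∑ m, L' j m * (a m : E)) * (∑ m, L' i m * (b₀ m : E))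
      ≠ (∑ m, L' i m * (a m : E)) * (∑ m, L' j m * (b₀ m : E))) :
    ∃ (b : Fin n → ℤ) (x : E), IsIntegral ℤ x ∧
      restrictLine a b F = Polynomial.C (MvPolynomial.eval a F) * minpoly ℤ x := by
  classical
  have : CharZero E := algebraRat.charZero E
  set a₀ := MvPolynomial.eval a F with ha₀
  let ℓ : Fin d → E := fun j => ∑ m, L' j m * (a m : E)
  have hprod : ∏ j, ℓ j = (a₀ : E) := by
    rw [ha₀, ← eval_map_intCast, hFE, map_prod]
    exact Finset.prod_congr rfl fun j _ => (eval_linForm _ _).symm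
  have ha₀E : (a₀ : E) ≠ 0 := Int.cast_ne_zero.2 ha
  have hℓ : ∀ j, ℓ j ≠ 0 := fun j =>
    Finset.prod_ne_zero_iff.1 (hprod ▸ ha₀E) j (Finset.mem_univ j)
  let M : Fin d → Fin n → E := fun j m => (ℓ j)⁻¹ * L' j m
  have hLM : ∀ j, linForm (L' j) = C (ℓ j) * linForm (M j) := by
    intro j
    simp only [linForm, M, Finset.mul_sum, map_mul]
    refine Finset.sum_congr rfl fun i _ => ?_
    rw [← mul_assoc, ← mul_assoc, ← map_mul, mul_inv_cancel₀ (hℓ j), map_one, one_mul]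
  let b : Fin n → ℤ := fun m => a₀ * b₀ m
  let θ : Fin d → E := fun j => ∑ m, M j m * algebraMap ℚ E (-(b m : ℚ))
  have hθ_eq : ∀ j, θ j = -((∏ i ∈ Finset.univ.erase j, ℓ i) * ∑ m, L' j m * (b₀ m : E)) := by
    intro j
    have h1 : (∏ i ∈ Finset.univ.erase j, ℓ i) = (ℓ j)⁻¹ * a₀ := by
      rw [← hprod, ← Finset.mul_prod_erase _ _ (Finset.mem_univ j), inv_mul_cancel_left₀ (hℓ j)]
    rw [h1, Finset.mul_sum, ← Finset.sum_neg_distrib]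
    refine Finset.sum_congr rfl fun m _ => ?_
    simp only [M, b, map_neg, map_mul, map_intCast, Int.cast_mul]
    ring
  have hθint : ∀ j, IsIntegral ℤ (θ j) := by
    have hsum : ∀ (j : Fin d) (x : Fin n → ℤ), IsIntegral ℤ (∑ m, L' j m * (x m : E)) :=
      fun j x => IsIntegral.sum _ fun m _ => (hLint j m).mul (isIntegral_algebraMap (x := x m))
    intro j
    rw [hθ_eq]
    exact ((IsIntegral.prod _ fun i _ => hsum i a).mul (hsum j b₀)).neg
  have hθinj : Function.Injective θ := by
    intro i j hij
    by_contra hne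
    apply hb i j hne
    have h1 : ∀ j, θ j = -(a₀ * ((ℓ j)⁻¹ * ∑ m, L' j m * (b₀ m : E))) := by
      intro j
      rw [Finset.mul_sum, Finset.mul_sum, ← Finset.sum_neg_distrib]
      refine Finset.sum_congr rfl fun m _ => ?_
      simp only [M, b, map_neg, map_mul, map_intCast, Int.cast_mul]
      ring
    rw [h1, h1, neg_inj, mul_right_inj' ha₀E, inv_mul_eq_iff_eq_mul₀ (hℓ i), ← mul_assoc,
      mul_comm (ℓ i), mul_assoc, ← inv_mul_eq_iff_eq_mul₀ (inv_ne_zero (hℓ j)), inv_inv] at hij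
    exact hij
  have hMa : ∀ j, ∑ m, M j m * algebraMap ℚ E (a m : ℚ) = 1 := by
    intro j
    simp only [M, mul_assoc, ← Finset.mul_sum, map_intCast]
    exact inv_mul_cancel₀ (hℓ j)
  have hP : (F.map (Int.castRingHom ℚ)).map (algebraMap ℚ E)
      = C (algebraMap ℚ E a₀) * ∏ j, linForm (M j) := by
    rw [MvPolynomial.map_map, RingHom.eq_intCast' ((algebraMap ℚ E).comp _), hFE,
      Finset.prod_congr rfl fun j _ => hLM j, Finset.prod_mul_distrib, ← map_prod, hprod,
      map_intCast (algebraMap ℚ E)]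
  have hconj := aeval_minpoly_eq_zero_of_irreducible hirr hP (fun m => (a m : ℚ))
    (fun m => -(b m : ℚ)) hMa hθinj
  have hfE : (restrictLine a b F).map (Int.castRingHom E)
      = Polynomial.C (a₀ : E) * ∏ j, (Polynomial.X - Polynomial.C (θ j)) := by
    rw [map_restrictLine, hFE, Finset.prod_congr rfl fun j _ => hLM j, Finset.prod_mul_distrib,
      ← map_prod, hprod, map_mul, map_prod, ← MvPolynomial.algebraMap_eq, AlgHom.commutes,
      Polynomial.algebraMap_eq]
    congr 1
    refine Finset.prod_congr rfl fun j _ => ?_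
    rw [restrictLine_linForm]
    have h1 := hMa j
    simp only [map_intCast] at h1
    simp only [eq_intCast, h1, map_one, one_mul, θ, map_neg, mul_neg, Finset.sum_neg_distrib,
      map_intCast, sub_neg_eq_add]
  let i₀ : Fin d := ⟨0, hd⟩
  refine ⟨b, θ i₀, hθint i₀, ?_⟩
  have hmin : (minpoly ℤ (θ i₀)).map (Int.castRingHom E)
      = ∏ j, (Polynomial.X - Polynomial.C (θ j)) := by
    have hmap : (minpoly ℤ (θ i₀)).map (Int.castRingHom E)
        = (minpoly ℚ (θ i₀)).map (algebraMap ℚ E) := by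
      rw [minpoly.isIntegrallyClosed_eq_field_fractions' ℚ (hθint i₀), Polynomial.map_map]
      exact congrArg (fun f => Polynomial.map f _) (Subsingleton.elim _ _)
    have hmonic : ((minpoly ℤ (θ i₀)).map (Int.castRingHom E)).Monic :=
      (minpoly.monic (hθint i₀)).map _
    refine Polynomial.eq_of_monic_of_associated hmonic
      (Polynomial.monic_prod_of_monic _ _ fun j _ => Polynomial.monic_X_sub_C _)
      (associated_of_dvd_dvd ?_ ?_)
    · have h1 : minpoly ℤ (θ i₀) ∣ restrictLine a b F := by
        refine minpoly.isIntegrallyClosed_dvd (hθint i₀) ?_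
        rw [Polynomial.aeval_def, ← Polynomial.eval_map, algebraMap_int_eq, hfE,
          Polynomial.eval_mul, Polynomial.eval_prod,
          Finset.prod_eq_zero (Finset.mem_univ i₀) (by simp), mul_zero]
      have h2 := Polynomial.map_dvd (Int.castRingHom E) h1
      rw [hfE] at h2
      exact (IsUnit.dvd_mul_left (Polynomial.isUnit_C.2 (IsUnit.mk0 _ ha₀E))).1 h2
    · refine Finset.prod_dvd_of_coprime
        (fun i _ j _ hij => Polynomial.pairwise_coprime_X_sub_C hθinj hij) fun j _ => ?_
      rw [Polynomial.dvd_iff_isRoot, hmap, Polynomial.IsRoot.def, Polynomial.eval_map,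
        ← Polynomial.aeval_def]
      exact hconj i₀ j
  apply Polynomial.map_injective (Int.castRingHom E) Int.cast_injective
  rw [hfE, Polynomial.map_mul, hmin, Polynomial.map_C, eq_intCast]

/-- On a suitable integral line, an irreducible decomposable form of non-zero discriminant is
a multiple of an irreducible monic integral polynomial. -/
theorem exists_restrictLine_eq_minpoly {E : Type*} [Field E] [Algebra ℚ E] [IsGalois ℚ E]
    (φ : E →+* ℂ) (hφ : ∀ x : ℂ, IsAlgebraic ℚ x → x ∈ Set.range φ)
    {n d : ℕ} (hn : 2 ≤ n) (hd : n < d)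
    {F : MvPolynomial (Fin n) ℤ} {L : Fin d → Fin n → ℂ} (hF : IsDecomp F L)
    (hirr : Irreducible (F.map (Int.castRingHom ℚ))) (hΔ : discProd L ≠ 0) :
    ∃ a b : Fin n → ℤ, MvPolynomial.eval a F ≠ 0 ∧ ∃ x : E, IsIntegral ℤ x ∧
      restrictLine a b F = Polynomial.C (MvPolynomial.eval a F) * minpoly ℤ x := by
  have hF0 : F ≠ 0 := by
    rintro rfl
    exact hirr.ne_zero (map_zero _)
  obtain ⟨a, b₀, ha, hb⟩ := exists_line hn hd hΔ hF0 hF.2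
  have hmem : ∀ j m, ∃ y : E, φ y = L j m := fun j m =>
    hφ _ ((hF.1 j m).isAlgebraic.extendScalars (RingHom.injective_int (algebraMap ℤ ℚ)))
  choose L' hL' using hmem
  have hLint : ∀ j m, IsIntegral ℤ (L' j m) := fun j m =>
    (isIntegral_algHom_iff φ.toIntAlgHom φ.injective).1 (by
      rw [RingHom.toIntAlgHom_apply, hL']
      exact hF.1 j m)
  have hFE : F.map (Int.castRingHom E) = ∏ j, linForm (L' j) := by
    apply MvPolynomial.map_injective φ φ.injective
    rw [MvPolynomial.map_map, map_prod, RingHom.eq_intCast' (φ.comp _), hF.2]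
    refine Finset.prod_congr rfl fun j _ => ?_
    rw [map_linForm]
    simp only [hL']
  obtain ⟨b, x, hx⟩ := exists_minpoly_of_restrictLine (by omega) hLint hFE hirr ha (b₀ := b₀)
    fun i j hij h => hb i j hij (by
      have h2 := congrArg φ h
      simp only [map_mul, map_sum, map_intCast, hL'] at h2
      exact h2)
  exact ⟨a, b, ha, x, hx⟩

/-- An integral complex number generates a number field. -/
theorem exists_numberField_minpoly_eq {x : ℂ} (hx : IsIntegral ℤ x) :
    ∃ (K : Type) (_ : Field K) (_ : NumberField K) (θ : NumberField.RingOfIntegers K),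
      IntermediateField.adjoin ℚ {(θ : K)} = ⊤ ∧ minpoly ℤ θ = minpoly ℤ x := by
  have hfin : FiniteDimensional ℚ (IntermediateField.adjoin ℚ {x}) :=
    IntermediateField.adjoin.finiteDimensional hx.tower_top
  have hnf : NumberField (IntermediateField.adjoin ℚ {x}) := ⟨⟩
  let g : IntermediateField.adjoin ℚ {x} := IntermediateField.AdjoinSimple.gen ℚ x
  let f : IntermediateField.adjoin ℚ {x} →ₐ[ℤ] ℂ :=
    (algebraMap (IntermediateField.adjoin ℚ {x}) ℂ).toIntAlgHom
  have hf : Function.Injective f := (algebraMap (IntermediateField.adjoin ℚ {x}) ℂ).injective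
  have hintegral : IsIntegral ℤ g := (isIntegral_algHom_iff f hf).1 hx
  refine ⟨IntermediateField.adjoin ℚ {x}, inferInstance, hnf, ⟨g, hintegral⟩, ?_, ?_⟩
  · exact IntermediateField.lift_injective _
      ((IntermediateField.lift_adjoin_simple ..).trans (IntermediateField.lift_top ..).symm)
  · have h : Function.Injective (algebraMap
        (NumberField.RingOfIntegers (IntermediateField.adjoin ℚ {x}))
        (IntermediateField.adjoin ℚ {x})).toIntAlgHom := NumberField.RingOfIntegers.coe_injective
    exact (minpoly.algHom_eq _ h _).symm.trans (minpoly.algHom_eq f hf _).symm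

theorem exists_numberField_restrictLine {n d : ℕ} (hn : 2 ≤ n) (hd : n < d)
    {F : MvPolynomial (Fin n) ℤ} {L : Fin d → Fin n → ℂ} (hF : IsDecomp F L)
    (hirr : Irreducible (F.map (Int.castRingHom ℚ))) (hΔ : discProd L ≠ 0) :
    ∃ a b : Fin n → ℤ, MvPolynomial.eval a F ≠ 0 ∧
      ∃ (K : Type) (_ : Field K) (_ : NumberField K)
        (θ : NumberField.RingOfIntegers K), IntermediateField.adjoin ℚ {(θ : K)} = ⊤ ∧
      restrictLine a b F = Polynomial.C (MvPolynomial.eval a F) * minpoly ℤ θ := by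
  have hcl := algebraicClosure.isAlgClosure ℚ ℂ
  have hG := @IsAlgClosure.isGalois ℚ _ _ _ _ hcl _
  have hφ : ∀ x : ℂ, IsAlgebraic ℚ x → x ∈ Set.range (algebraMap (algebraicClosure ℚ ℂ) ℂ) :=
    fun x hx => ⟨⟨x, mem_algebraicClosure_iff.2 hx⟩, rfl⟩
  obtain ⟨a, b, ha, x, hx, h⟩ := @exists_restrictLine_eq_minpoly (algebraicClosure ℚ ℂ) _ _ hG
    (algebraMap _ ℂ) hφ n d hn hd F L hF hirr hΔ
  let f : algebraicClosure ℚ ℂ →ₐ[ℤ] ℂ := (algebraMap (algebraicClosure ℚ ℂ) ℂ).toIntAlgHom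
  have hf : Function.Injective f := (algebraMap (algebraicClosure ℚ ℂ) ℂ).injective
  obtain ⟨K, i₁, i₂, θ, hθ, hmin⟩ :=
    exists_numberField_minpoly_eq ((isIntegral_algHom_iff f hf).2 hx)
  refine ⟨a, b, ha, K, i₁, i₂, θ, hθ, ?_⟩
  rw [hmin, minpoly.algHom_eq f hf, h]

/-- The linear factors of a separable polynomial have distinct roots. -/
theorem card_le_card_roots_of_separable {k : Type*} [Field k] [DecidableEq k]
    {h G : Polynomial k} (hh : h.Separable) {a₀ : k} (ha₀ : a₀ ≠ 0) {t : ℕ} {u v : Fin t → k}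
    (hu : ∀ i, u i ≠ 0) (hfac : Polynomial.C a₀ * h =
      G * ∏ i, (Polynomial.C (u i) * Polynomial.X + Polynomial.C (v i))) :
    t ≤ h.roots.toFinset.card := by
  have hlin : ∀ i, Polynomial.C (u i) * Polynomial.X + Polynomial.C (v i) =
      Polynomial.C (u i) * (Polynomial.X - Polynomial.C (-(v i / u i))) := by
    intro i
    rw [mul_sub, ← map_mul, mul_neg, mul_div_cancel₀ _ (hu i), map_neg, sub_neg_eq_add]
  have hdvd : ∏ i, (Polynomial.X - Polynomial.C (-(v i / u i))) ∣ h := by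
    rw [← IsUnit.dvd_mul_left (Polynomial.isUnit_C.2 (IsUnit.mk0 _ ha₀)), hfac]
    refine dvd_mul_of_dvd_right (Finset.prod_dvd_prod_of_dvd _ _ fun i _ => ?_) _
    rw [hlin]
    exact dvd_mul_left _ _
  have hinj : Function.Injective fun i => -(v i / u i) := by
    intro i j hij
    by_contra hne
    have h2 : (Polynomial.X - Polynomial.C (-(v i / u i))) *
        (Polynomial.X - Polynomial.C (-(v i / u i))) ∣ h := by
      refine dvd_trans ?_ hdvd
      rw [← Finset.mul_prod_erase _ _ (Finset.mem_univ i),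
        ← Finset.mul_prod_erase _ _ (Finset.mem_erase.2 ⟨Ne.symm hne, Finset.mem_univ j⟩),
        ← mul_assoc]
      refine dvd_mul_of_dvd_left (mul_dvd_mul_left _ ?_) _
      rw [show -(v i / u i) = -(v j / u j) from hij]
    exact Polynomial.not_isUnit_X_sub_C _ (hh.squarefree _ h2)
  have hroot : ∀ i, -(v i / u i) ∈ h.roots.toFinset := by
    intro i
    rw [Multiset.mem_toFinset, Polynomial.mem_roots hh.ne_zero, ← Polynomial.dvd_iff_isRoot]
    exact (Finset.dvd_prod_of_mem (fun i => Polynomial.X - Polynomial.C (-(v i / u i)))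
      (Finset.mem_univ i)).trans hdvd
  have := Finset.card_le_card_of_injOn (s := Finset.univ) _ (fun i _ => hroot i) hinj.injOn
  rwa [Finset.card_univ, Fintype.card_fin] at this

/-- The reduction modulo almost all primes of a polynomial that is separable over `ℚ` is
separable. -/
theorem exists_separable_map_zmod {h : Polynomial ℤ}
    (hsep : (h.map (Int.castRingHom ℚ)).Separable) :
    ∃ N : ℤ, N ≠ 0 ∧ ∀ p : ℕ, p.Prime → ¬ (p : ℤ) ∣ N →
      (h.map (Int.castRingHom (ZMod p))).Separable := by
  obtain ⟨u, v, huv⟩ := hsep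
  obtain ⟨c, hc, hu⟩ := IsLocalization.integerNormalization_spec (nonZeroDivisors ℤ) u
  obtain ⟨e, he, hv⟩ := IsLocalization.integerNormalization_spec (nonZeroDivisors ℤ) v
  set U := IsLocalization.integerNormalization (nonZeroDivisors ℤ) u
  set V := IsLocalization.integerNormalization (nonZeroDivisors ℤ) v
  have key : Polynomial.C e * U * h + Polynomial.C c * V * Polynomial.derivative h
      = Polynomial.C (c * e) := by
    apply Polynomial.map_injective (Int.castRingHom ℚ) Int.cast_injective
    rw [algebraMap_int_eq, zsmul_eq_mul] at hu hv
    simp only [Polynomial.map_add, Polynomial.map_mul, hu, hv, eq_intCast,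
      ← Polynomial.derivative_map, map_mul, Polynomial.map_intCast]
    linear_combination (c * e : Polynomial ℚ) * huv
  refine ⟨c * e, mul_ne_zero (nonZeroDivisors.ne_zero hc) (nonZeroDivisors.ne_zero he),
    fun p hp hN => ?_⟩
  have : Fact p.Prime := ⟨hp⟩
  have hN' : ((c * e : ℤ) : ZMod p) ≠ 0 := by
    rwa [Ne, ZMod.intCast_zmod_eq_zero_iff_dvd]
  have key' := congrArg (Polynomial.map (Int.castRingHom (ZMod p))) key
  simp only [Polynomial.map_add, Polynomial.map_mul, Polynomial.map_C, ← Polynomial.derivative_map,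
    eq_intCast (Int.castRingHom (ZMod p))] at key'
  refine ⟨Polynomial.C (((c * e : ℤ) : ZMod p)⁻¹) * (Polynomial.C (e : ZMod p) *
    U.map (Int.castRingHom (ZMod p))), Polynomial.C (((c * e : ℤ) : ZMod p)⁻¹) *
      (Polynomial.C (c : ZMod p) * V.map (Int.castRingHom (ZMod p))), ?_⟩
  rw [mul_assoc, mul_assoc (Polynomial.C (((c * e : ℤ) : ZMod p)⁻¹)), ← mul_add, key', ← map_mul,
    inv_mul_cancel₀ hN', map_one]

theorem tau_le_card_roots {n p : ℕ} [Fact p.Prime] {F : MvPolynomial (Fin n) ℤ}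
    {a b : Fin n → ℤ} {h : Polynomial ℤ}
    (hline : restrictLine a b F = Polynomial.C (MvPolynomial.eval a F) * h)
    (ha : ¬ (p : ℤ) ∣ MvPolynomial.eval a F)
    (hsep : (h.map (Int.castRingHom (ZMod p))).Separable) {t : ℕ} {c : Fin t → Fin n → ZMod p}
    {G : MvPolynomial (Fin n) (ZMod p)}
    (hfac : F.map (Int.castRingHom (ZMod p)) = G * ∏ i, linForm (c i)) :
    t ≤ (h.map (Int.castRingHom (ZMod p))).roots.toFinset.card := by
  have ha' : ((MvPolynomial.eval a F : ℤ) : ZMod p) ≠ 0 := by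
    rwa [Ne, ZMod.intCast_zmod_eq_zero_iff_dvd]
  have hu : ∀ i, ∑ m, c i m * (a m : ZMod p) ≠ 0 := by
    have h1 := eval_map_intCast (R := ZMod p) F a
    rw [hfac, map_mul, map_prod] at h1
    intro i
    have h2 := Finset.prod_ne_zero_iff.1 (right_ne_zero_of_mul (h1 ▸ ha')) i (Finset.mem_univ i)
    rwa [eval_linForm] at h2
  refine card_le_card_roots_of_separable hsep ha' hu
    (G := restrictLine (fun i => (a i : ZMod p)) (fun i => (b i : ZMod p)) G)
    (v := fun i => ∑ m, c i m * (b m : ZMod p)) ?_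
  have h3 := map_restrictLine (Int.castRingHom (ZMod p)) a b F
  rw [hline, hfac, map_mul, map_prod, Polynomial.map_mul, Polynomial.map_C] at h3
  simp only [eq_intCast] at h3
  rw [h3]
  congr 1
  exact Finset.prod_congr rfl fun i _ => restrictLine_linForm _ _ _

open NumberField in
theorem exponent_ne_zero_of_adjoin_eq_top {K : Type*} [Field K] [NumberField K] {θ : 𝓞 K}
    (hθ : IntermediateField.adjoin ℚ {(θ : K)} = ⊤) : RingOfIntegers.exponent θ ≠ 0 := by
  have hintegral : IsIntegral ℚ (θ : K) := Algebra.IsIntegral.isIntegral _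
  have htop : Algebra.adjoin ℚ {(θ : K)} = ⊤ := by
    rw [← IntermediateField.adjoin_simple_toSubalgebra_of_isAlgebraic hintegral.isAlgebraic, hθ,
      IntermediateField.top_toSubalgebra]
  let B := PowerBasis.ofAdjoinEqTop hintegral htop
  have hB : B.gen = (θ : K) := PowerBasis.ofAdjoinEqTop_gen hintegral htop
  have hBint : IsIntegral ℤ B.gen := hB ▸ θ.2
  obtain ⟨D, hD⟩ : ∃ D : ℤ, algebraMap ℤ ℚ D = Algebra.discr ℚ B.basis := by
    refine IsIntegrallyClosed.isIntegral_iff.1 (Algebra.discr_isIntegral ℚ fun i => ?_)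
    rw [B.basis_eq_pow]
    exact hBint.pow _
  have hD0 : D ≠ 0 := by
    rintro rfl
    rw [map_zero] at hD
    exact Algebra.discr_not_zero_of_basis ℚ B.basis hD.symm
  have hmem : (D : 𝓞 K) ∈ conductor ℤ θ := by
    rw [mem_conductor_iff]
    intro z
    have h1 := Algebra.discr_mul_isIntegral_mem_adjoin ℚ hBint (RingOfIntegers.isIntegral_coe z)
    rw [← hD, hB] at h1
    have h2 : (algebraMap (𝓞 K) K).toIntAlgHom (D * z) ∈
        (Algebra.adjoin ℤ {θ}).map (algebraMap (𝓞 K) K).toIntAlgHom := by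
      rw [AlgHom.map_adjoin_singleton]
      convert h1 using 1
      · rfl
      rw [RingHom.toIntAlgHom_apply, map_mul, map_intCast, Algebra.smul_def, eq_intCast,
        map_intCast]
    obtain ⟨y, hy, hyz⟩ := h2
    rwa [← RingOfIntegers.coe_injective hyz]
  rw [RingOfIntegers.exponent, Ne, Ideal.absNorm_eq_zero_iff]
  intro h
  have : D ∈ Ideal.under ℤ (conductor ℤ θ) := by
    rw [Ideal.under_def, Ideal.mem_comap]
    simpa using hmem
  rw [h] at this
  exact hD0 this

open NumberField in
/-- Simple roots modulo `p` of the minimal polynomial of an integer generate distinct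
ideals of norm `p`. -/
theorem card_roots_le_ncard_absNorm {K : Type*} [Field K] [NumberField K] {θ : 𝓞 K} {p : ℕ}
    [Fact p.Prime] (hp : ¬ p ∣ RingOfIntegers.exponent θ) :
    ((minpoly ℤ θ).map (Int.castRingHom (ZMod p))).roots.toFinset.card ≤
      {I : Ideal (𝓞 K) | Ideal.absNorm I = p}.ncard := by
  classical
  have h0 : (minpoly ℤ θ).map (Int.castRingHom (ZMod p)) ≠ 0 :=
    Polynomial.map_monic_ne_zero (minpoly.monic θ.isIntegral)
  have hmem : ∀ r ∈ ((minpoly ℤ θ).map (Int.castRingHom (ZMod p))).roots.toFinset,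
      Polynomial.X - Polynomial.C r ∈ RingOfIntegers.monicFactorsMod θ p := by
    intro r hr
    rw [Multiset.mem_toFinset, Polynomial.mem_roots h0, ← Polynomial.dvd_iff_isRoot] at hr
    rw [RingOfIntegers.monicFactorsMod, Multiset.mem_toFinset,
      UniqueFactorizationMonoid.mem_normalizedFactors_iff' h0]
    exact ⟨Polynomial.irreducible_X_sub_C r, (Polynomial.monic_X_sub_C r).normalize_eq_self, hr⟩
  let f : ((minpoly ℤ θ).map (Int.castRingHom (ZMod p))).roots.toFinset → Ideal (𝓞 K) := fun r =>
    ((Ideal.primesOverSpanEquivMonicFactorsMod hp).symm ⟨_, hmem r.1 r.2⟩ : Ideal (𝓞 K))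
  have hf : Function.Injective f := by
    intro r s hrs
    have h1 := (Ideal.primesOverSpanEquivMonicFactorsMod hp).symm.injective (Subtype.ext hrs)
    have h2 := congrArg Subtype.val h1
    simp only [sub_right_inj, Polynomial.C_inj] at h2
    exact Subtype.ext h2
  have hnorm : ∀ r, Ideal.absNorm (f r) = p := by
    intro r
    have h1 := Ideal.inertiaDeg_primesOverSpanEquivMonicFactorsMod_symm_apply' hp (hmem r.1 r.2)
    rw [Polynomial.natDegree_X_sub_C] at h1
    have : (f r).LiesOver (Ideal.span {(p : ℤ)}) :=
      ((Ideal.primesOverSpanEquivMonicFactorsMod hp).symm ⟨_, hmem r.1 r.2⟩).2.2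
    have : (f r).IsPrime :=
      ((Ideal.primesOverSpanEquivMonicFactorsMod hp).symm ⟨_, hmem r.1 r.2⟩).2.1
    have h2 := Ideal.natAbs_pow_inertiaDeg (p : ℤ) (f r)
    rw [h1, Int.natAbs_natCast, pow_one] at h2
    exact h2.symm
  have h3 := Set.ncard_le_ncard (s := Set.range f) (t := {I : Ideal (𝓞 K) | Ideal.absNorm I = p})
    (by rintro _ ⟨r, rfl⟩; exact hnorm r) (Ideal.finite_setOfPred_absNorm_eq p)
  rwa [Set.ncard_range_of_injective hf, Nat.card_eq_fintype_card, Fintype.card_coe] at h3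

open NumberField in
/-- Submultiplicativity of the number of ideals of given norm. -/
theorem ncard_absNorm_mul_le {K : Type*} [Field K] [NumberField K] {a b : ℕ}
    (hab : a.Coprime b) :
    {I : Ideal (𝓞 K) | Ideal.absNorm I = a}.ncard * {I : Ideal (𝓞 K) | Ideal.absNorm I = b}.ncard
      ≤ {I : Ideal (𝓞 K) | Ideal.absNorm I = a * b}.ncard := by
  have hrec : ∀ {a b : ℕ}, a.Coprime b → ∀ I J : Ideal (𝓞 K), Ideal.absNorm I = a →
      Ideal.absNorm J = b → I * J ⊔ Ideal.span {(a : 𝓞 K)} = I := by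
    rintro a b hab I J rfl rfl
    have hI : Ideal.span {(Ideal.absNorm I : 𝓞 K)} ≤ I :=
      (Ideal.span_singleton_le_iff_mem _).2 (Ideal.absNorm_mem I)
    have hJ : Ideal.span {(Ideal.absNorm J : 𝓞 K)} ≤ J :=
      (Ideal.span_singleton_le_iff_mem _).2 (Ideal.absNorm_mem J)
    refine le_antisymm (sup_le Ideal.mul_le_left hI) ?_
    have h1 : J ⊔ Ideal.span {(Ideal.absNorm I : 𝓞 K)} = ⊤ := by
      rw [Ideal.eq_top_iff_one]
      obtain ⟨x, y, hxy⟩ := (Nat.isCoprime_iff_coprime.2 hab)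
      have h2 : (1 : 𝓞 K) = y * (Ideal.absNorm J : 𝓞 K) + x * (Ideal.absNorm I : 𝓞 K) := by
        rw [add_comm]
        exact_mod_cast congrArg (Int.cast : ℤ → 𝓞 K) hxy.symm
      rw [h2]
      exact Submodule.add_mem_sup (J.mul_mem_left _ (Ideal.absNorm_mem J))
        (Ideal.mul_mem_left _ _ (Ideal.mem_span_singleton_self _))
    calc I = I * (J ⊔ Ideal.span {(Ideal.absNorm I : 𝓞 K)}) := by rw [h1, Ideal.mul_top]
      _ = I * J ⊔ I * Ideal.span {(Ideal.absNorm I : 𝓞 K)} := Ideal.mul_sup _ _ _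
      _ ≤ _ := sup_le_sup_left Ideal.mul_le_right _
  rw [← Set.ncard_prod]
  refine Set.ncard_le_ncard_of_injOn (fun x => x.1 * x.2) ?_ ?_
    (Ideal.finite_setOfPred_absNorm_eq _)
  · rintro ⟨I, J⟩ ⟨hI, hJ⟩
    simp only [Set.mem_ofPred_eq] at hI hJ ⊢
    rw [map_mul, hI, hJ]
  · rintro ⟨I, J⟩ ⟨hI, hJ⟩ ⟨I', J'⟩ ⟨hI', hJ'⟩ h
    simp only [Set.mem_ofPred_eq] at hI hJ hI' hJ' h
    refine Prod.ext ?_ ?_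
    · rw [← hrec hab I J hI hJ, h, hrec hab I' J' hI' hJ']
    · rw [← hrec hab.symm J I hJ hI, mul_comm, h, mul_comm, hrec hab.symm J' I' hJ' hI']

open NumberField in
theorem prod_ncard_absNorm_le {K : Type*} [Field K] [NumberField K] (s : Finset ℕ)
    (hs : ∀ p ∈ s, p.Prime) :
    ∏ p ∈ s, {I : Ideal (𝓞 K) | Ideal.absNorm I = p}.ncard ≤
      {I : Ideal (𝓞 K) | Ideal.absNorm I = ∏ p ∈ s, p}.ncard := by
  classical
  induction s using Finset.induction_on with
  | empty => simp [Ideal.absNorm_eq_one_iff]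
  | insert q s hq ih =>
    have hs' : ∀ p ∈ s, p.Prime := fun p hp => hs p (Finset.mem_insert_of_mem hp)
    have hqp := hs q (Finset.mem_insert_self q s)
    rw [Finset.prod_insert hq, Finset.prod_insert hq]
    refine (Nat.mul_le_mul_left _ (ih hs')).trans (ncard_absNorm_mul_le ?_)
    refine Nat.Coprime.prod_right fun p hp => (Nat.coprime_primes hqp (hs' p hp)).2 ?_
    rintro rfl
    exact hq hp

open NumberField in
theorem exists_sum_ncard_absNorm_le (K : Type*) [Field K] [NumberField K] :
    ∃ C : ℝ, 0 < C ∧ ∀ X : ℝ, 0 ≤ X →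
      ∑ u ∈ Finset.Ioc 0 ⌊X⌋₊, ({I : Ideal (𝓞 K) | Ideal.absNorm I = u}.ncard : ℝ) ≤ C * X := by
  classical
  have hfin : ∀ N : ℕ, {I : Ideal (𝓞 K) | Ideal.absNorm I ≤ N}.Finite := fun N =>
    Ideal.finite_setOfPred_absNorm_le N
  have hsum : ∀ N : ℕ, ∑ u ∈ Finset.Ioc 0 N, {I : Ideal (𝓞 K) | Ideal.absNorm I = u}.ncard
      ≤ {I : Ideal (𝓞 K) | Ideal.absNorm I ≤ N}.ncard := by
    intro N
    have h1 : ∀ u, {I : Ideal (𝓞 K) | Ideal.absNorm I = u}.ncard =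
        (Ideal.finite_setOfPred_absNorm_eq (S := 𝓞 K) u).toFinset.card := fun u =>
      Set.ncard_eq_toFinset_card _ _
    rw [Finset.sum_congr rfl fun u _ => h1 u, ← Finset.card_biUnion,
      Set.ncard_eq_toFinset_card _ (hfin N)]
    · refine Finset.card_le_card fun I hI => ?_
      simp only [Finset.mem_biUnion, Finset.mem_Ioc, Set.Finite.mem_toFinset,
        Set.mem_ofPred_eq] at hI ⊢
      obtain ⟨u, hu, rfl⟩ := hI
      exact hu.2
    · intro u _ v _ huv
      refine Finset.disjoint_left.2 fun I hI hI' => huv ?_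
      simp only [Set.Finite.mem_toFinset, Set.mem_ofPred_eq] at hI hI'
      exact hI.symm.trans hI'
  have hlim := Ideal.tendsto_norm_le_div_atTop K
  obtain ⟨X₀, hX₀⟩ := eventually_atTop.1
    ((hlim.eventually_le_const (lt_add_one _)).and (eventually_gt_atTop 0))
  set c := (2 ^ InfinitePlace.nrRealPlaces K * (2 * Real.pi) ^ InfinitePlace.nrComplexPlaces K *
    Units.regulator K * classNumber K) / (Units.torsionOrder K * Real.sqrt |discr K|) + 1
  set D : ℝ := ({I : Ideal (𝓞 K) | Ideal.absNorm I ≤ ⌊X₀⌋₊}.ncard : ℝ) with hDdef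
  have hD : 0 ≤ D := Nat.cast_nonneg _
  refine ⟨|c| + D + 1, by positivity, fun X hX => ?_⟩
  rcases lt_or_ge X 1 with hX1 | hX1
  · rw [Nat.floor_eq_zero.2 hX1, Finset.Ioc_self, Finset.sum_empty]
    positivity
  rw [← Nat.cast_sum]
  refine (Nat.cast_le.2 (hsum ⌊X⌋₊)).trans ?_
  rcases le_total X₀ X with h | h
  · obtain ⟨h1, h2⟩ := hX₀ X h
    rw [div_le_iff₀ h2] at h1
    have h3 : (({I : Ideal (𝓞 K) | Ideal.absNorm I ≤ ⌊X⌋₊}.ncard : ℕ) : ℝ) ≤ c * X := by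
      refine le_trans (le_of_eq ?_) h1
      rw [← Nat.card_coe_set_eq]
      simp only [Nat.le_floor_iff hX]
      rfl
    refine h3.trans (mul_le_mul_of_nonneg_right ?_ hX)
    linarith [le_abs_self c]
  · have h1 : (({I : Ideal (𝓞 K) | Ideal.absNorm I ≤ ⌊X⌋₊}.ncard : ℕ) : ℝ) ≤ D :=
      Nat.cast_le.2 (Set.ncard_le_ncard (fun I hI => le_trans hI (Nat.floor_mono h)) (hfin _))
    nlinarith [abs_nonneg c]

/-- A function defined on primes, extended by zero. -/
def primeExt (τ : ∀ p : ℕ, p.Prime → ℕ) (p : ℕ) : ℕ := if hp : p.Prime then τ p hp else 0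

theorem primeExt_of_prime (τ : ∀ p : ℕ, p.Prime → ℕ) {p : ℕ} (hp : p.Prime) :
    primeExt τ p = τ p hp := dif_pos hp

/-- Reduction modulo `p` of a factorization over `ℤ_p`. -/
theorem IsPadicFact.map_intCast_zmod {n p t : ℕ} {F : MvPolynomial (Fin n) ℤ} {hp : p.Prime}
    {ℓ : Fin t → Fin n → @PadicInt p ⟨hp⟩} {G : MvPolynomial (Fin n) (@PadicInt p ⟨hp⟩)}
    (h : IsPadicFact F p hp ℓ G) : F.map (Int.castRingHom (ZMod p)) =
      G.map (@PadicInt.toZMod p ⟨hp⟩) *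
        ∏ i, linForm fun m => (@PadicInt.toZMod p ⟨hp⟩) (ℓ i m) := by
  have h1 := congrArg (MvPolynomial.map (@PadicInt.toZMod p ⟨hp⟩)) h.1
  rw [MvPolynomial.map_map, map_mul, map_prod, RingHom.eq_intCast' (RingHom.comp _ _)] at h1
  rw [h1]
  congr 1
  exact Finset.prod_congr rfl fun i _ => map_linForm _ _

/-- The number of linear factors of an irreducible decomposable form over `ℤ_p` is bounded, and
bounded on average by a constant. -/
theorem exists_sum_prod_tau_le {n d : ℕ} (hn : 2 ≤ n) (hd : n < d)
    {F : MvPolynomial (Fin n) ℤ} {L : Fin d → Fin n → ℂ} (hF : IsDecomp F L)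
    (hirr : Irreducible (F.map (Int.castRingHom ℚ))) (hΔ : discProd L ≠ 0)
    {τ : ∀ p : ℕ, p.Prime → ℕ}
    {𝓛 : ∀ (p : ℕ) (hp : p.Prime), Fin (τ p hp) → Fin n → @PadicInt p ⟨hp⟩}
    {Fstar : ∀ (p : ℕ) (hp : p.Prime), MvPolynomial (Fin n) (@PadicInt p ⟨hp⟩)}
    (hfact : ∀ (p : ℕ) (hp : p.Prime), IsPadicFact F p hp (𝓛 p hp) (Fstar p hp)) :
    ∃ (p₀ D : ℕ) (C : ℝ), 0 < C ∧
      (∀ (p : ℕ) (hp : p.Prime), p₀ < p → τ p hp ≤ D) ∧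
      (∀ (p : ℕ) (hp : p.Prime), p₀ < p → ∀ i, ∃ m, (@PadicInt.toZMod p ⟨hp⟩) (𝓛 p hp i m) ≠ 0) ∧
      ∀ X : ℝ, 0 ≤ X → ∑ u ∈ (Finset.Ioc 0 ⌊X⌋₊).filter
          (fun u => Squarefree u ∧ ∀ p ∈ u.primeFactors, p₀ < p),
        ∏ p ∈ u.primeFactors, (primeExt τ p : ℝ) ≤ C * X := by
  obtain ⟨a, b, ha, K, _, _, θ, hθ, hline⟩ := exists_numberField_restrictLine hn hd hF hirr hΔ
  have hsepQ : ((minpoly ℤ θ).map (Int.castRingHom ℚ)).Separable :=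
    ((Polynomial.Monic.irreducible_iff_irreducible_map_fraction_map
      (minpoly.monic θ.isIntegral)).1 (minpoly.irreducible θ.isIntegral)).separable
  obtain ⟨N, hN, hsep⟩ := exists_separable_map_zmod hsepQ
  obtain ⟨C, hC, hsum⟩ := exists_sum_ncard_absNorm_le K
  have he := exponent_ne_zero_of_adjoin_eq_top hθ
  set e := RingOfIntegers.exponent θ
  set p₀ := (MvPolynomial.eval a F).natAbs + N.natAbs + e with hp₀
  have hnd : ∀ {z : ℤ} {p : ℕ}, z ≠ 0 → z.natAbs ≤ p₀ → p₀ < p → ¬ (p : ℤ) ∣ z := by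
    intro z p hz hzp hp hdvd
    have := Int.natAbs_le_of_dvd_ne_zero hdvd hz
    rw [Int.natAbs_natCast] at this
    omega
  have hroots : ∀ (p : ℕ) (hp : p.Prime), p₀ < p → haveI := Fact.mk hp; τ p hp ≤
      ((minpoly ℤ θ).map (Int.castRingHom (ZMod p))).roots.toFinset.card := by
    intro p hp hlt
    have : Fact p.Prime := ⟨hp⟩
    exact tau_le_card_roots hline (hnd ha (by omega) hlt)
      (hsep p hp (hnd hN (by omega) hlt)) (hfact p hp).map_intCast_zmod
  have hideal : ∀ (p : ℕ) (hp : p.Prime), p₀ < p → τ p hp ≤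
      {I : Ideal (NumberField.RingOfIntegers K) | Ideal.absNorm I = p}.ncard := by
    intro p hp hlt
    have : Fact p.Prime := ⟨hp⟩
    refine (hroots p hp hlt).trans (card_roots_le_ncard_absNorm fun hdvd => ?_)
    have := Nat.le_of_dvd (Nat.pos_of_ne_zero he) hdvd
    omega
  refine ⟨p₀, (minpoly ℤ θ).natDegree, C, hC, fun p hp hlt => ?_, fun p hp hlt i => ?_,
    fun X hX => le_trans ?_ (hsum X hX)⟩
  · have : Fact p.Prime := ⟨hp⟩
    exact (hroots p hp hlt).trans ((Multiset.toFinset_card_le _).trans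
      ((Polynomial.card_roots' _).trans Polynomial.natDegree_map_le))
  · have : Fact p.Prime := ⟨hp⟩
    by_contra! h
    have h1 := eval_map_intCast (R := ZMod p) F a
    rw [(hfact p hp).map_intCast_zmod, map_mul, map_prod, Finset.prod_eq_zero (Finset.mem_univ i)
      (by rw [eval_linForm]; exact Finset.sum_eq_zero fun m _ => by rw [h m, zero_mul]),
      mul_zero, eq_comm, ZMod.intCast_zmod_eq_zero_iff_dvd] at h1
    exact hnd ha (by omega) hlt h1
  · refine (Finset.sum_le_sum fun u hu => ?_).trans
      (Finset.sum_le_sum_of_subset_of_nonneg (Finset.filter_subset _ _)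
        fun _ _ _ => Nat.cast_nonneg _)
    obtain ⟨-, hsq, hu⟩ := Finset.mem_filter.1 hu
    rw [← Nat.cast_prod, Nat.cast_le]
    calc ∏ p ∈ u.primeFactors, primeExt τ p
        ≤ ∏ p ∈ u.primeFactors,
          {I : Ideal (NumberField.RingOfIntegers K) | Ideal.absNorm I = p}.ncard := by
          refine Finset.prod_le_prod' fun p hp => ?_
          rw [primeExt_of_prime τ (Nat.prime_of_mem_primeFactors hp)]
          exact hideal p _ (hu p hp)
      _ ≤ _ := by
          have := prod_ncard_absNorm_le (K := K) u.primeFactors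
            fun p hp => Nat.prime_of_mem_primeFactors hp
          rwa [Nat.prod_primeFactors_of_squarefree hsq] at this

/-- A non-zero linear form over `𝔽_p` has at most `p ^ (n - 1)` zeros. -/
theorem card_linear_zeros_mul_le {n p : ℕ} [Fact p.Prime] {c : Fin n → ZMod p}
    (hc : ∃ m, c m ≠ 0) :
    (Finset.univ.filter fun x : Fin n → ZMod p => ∑ m, c m * x m = 0).card * p ≤ p ^ n := by
  obtain ⟨m₀, hm₀⟩ := hc
  have h : ((Finset.univ.filter fun x : Fin n → ZMod p => ∑ m, c m * x m = 0) ×ˢ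
      (Finset.univ : Finset (ZMod p))).card ≤
      (Finset.univ : Finset (Fin n → ZMod p)).card := by
    refine Finset.card_le_card_of_injOn (fun q => q.1 + Pi.single m₀ q.2)
      (fun _ _ => Finset.mem_coe.2 (Finset.mem_univ _)) ?_
    have key : ∀ q : (Fin n → ZMod p) × ZMod p, (∑ m, c m * q.1 m = 0) →
        ∑ m, c m * (q.1 + Pi.single m₀ q.2 : Fin n → ZMod p) m = c m₀ * q.2 := by
      intro q hq
      simp only [Pi.add_apply, mul_add, Finset.sum_add_distrib, hq, zero_add]
      rw [Finset.sum_eq_single m₀ (fun m _ hm => by simp [hm]) (by simp), Pi.single_eq_same]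
    rintro ⟨x, s⟩ hx ⟨y, t⟩ hy hxy
    simp only [Finset.coe_product, Finset.coe_univ, Set.mem_prod, Finset.mem_coe,
      Finset.mem_filter, Finset.mem_univ, true_and, Set.mem_univ, and_true] at hx hy
    have h1 := key (x, s) hx
    have h2 := key (y, t) hy
    simp only at hxy h1 h2
    have hst : s = t := mul_left_cancel₀ hm₀ (by rw [← h1, ← h2, hxy])
    subst hst
    rw [add_right_cancel hxy]
  simpa [Finset.card_product, ZMod.card] using h

/-- The union of the zero sets of `t` non-zero linear forms over `𝔽_p`. -/
theorem card_exists_linear_zero_mul_le {n p t : ℕ} [Fact p.Prime] {c : Fin t → Fin n → ZMod p}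
    (hc : ∀ i, ∃ m, c i m ≠ 0) :
    (Finset.univ.filter fun x : Fin n → ZMod p => ∃ i, ∑ m, c i m * x m = 0).card * p ≤
      t * p ^ n := by
  have h : (Finset.univ.filter fun x : Fin n → ZMod p => ∃ i, ∑ m, c i m * x m = 0) ⊆
      Finset.univ.biUnion fun i =>
        Finset.univ.filter fun x : Fin n → ZMod p => ∑ m, c i m * x m = 0 := by
    intro x hx
    simpa using hx
  calc _ ≤ (∑ i : Fin t, (Finset.univ.filter
        fun x : Fin n → ZMod p => ∑ m, c i m * x m = 0).card) * p :=
        Nat.mul_le_mul_right _ ((Finset.card_le_card h).trans Finset.card_biUnion_le)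
    _ ≤ ∑ _i : Fin t, p ^ n := by
        rw [Finset.sum_mul]
        exact Finset.sum_le_sum fun i _ => card_linear_zeros_mul_le (hc i)
    _ = _ := by simp

/-- A zero of `F` modulo `p` off the set `𝒮_p` lies on one of the linear factors. -/
theorem IsPadicFact.exists_linear_zero {n p t : ℕ} {F : MvPolynomial (Fin n) ℤ} {hp : p.Prime}
    {ℓ : Fin t → Fin n → @PadicInt p ⟨hp⟩} {G : MvPolynomial (Fin n) (@PadicInt p ⟨hp⟩)}
    (h : IsPadicFact F p hp ℓ G) {a : Fin n → ℤ} (ha : (p : ℤ) ∣ MvPolynomial.eval a F)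
    (hS : ¬ Sp p hp ℓ G fun i => (a i : ZMod p)) :
    ∃ i, ∑ m, (@PadicInt.toZMod p ⟨hp⟩) (ℓ i m) * (a m : ZMod p) = 0 := by
  have : Fact p.Prime := ⟨hp⟩
  have h1 := eval_map_intCast (R := ZMod p) F a
  rw [h.map_intCast_zmod, map_mul, map_prod, (ZMod.intCast_zmod_eq_zero_iff_dvd _ _).2 ha,
    mul_eq_zero, Finset.prod_eq_zero_iff] at h1
  rcases h1 with h1 | ⟨i, -, h1⟩
  · exact absurd (Or.inr h1) hS
  · exact ⟨i, by rwa [eval_linForm] at h1⟩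

/-- The density of `ℛ_l` is at most `∏_{p ∣ u₂} τ(p) / p`. -/
theorem ncard_Rset_div_le {n : ℕ} {F : MvPolynomial (Fin n) ℤ}
    {τ : ∀ p : ℕ, p.Prime → ℕ}
    {𝓛 : ∀ (p : ℕ) (hp : p.Prime), Fin (τ p hp) → Fin n → @PadicInt p ⟨hp⟩}
    {Fstar : ∀ (p : ℕ) (hp : p.Prime), MvPolynomial (Fin n) (@PadicInt p ⟨hp⟩)}
    (hfact : ∀ (p : ℕ) (hp : p.Prime), IsPadicFact F p hp (𝓛 p hp) (Fstar p hp))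
    {k u₁ u₂ D : ℕ} (hu₁ : u₁ ≠ 0) (hD : D ≠ 0) (hsq : Squarefree u₂)
    (hcop : Nat.Coprime (u₁ * D) u₂)
    (hne : ∀ (p : ℕ) (hp : p.Prime), p ∣ u₂ → ∀ i, ∃ m,
      (@PadicInt.toZMod p ⟨hp⟩) (𝓛 p hp i m) ≠ 0) :
    ((Rset F 𝓛 Fstar k u₁ u₂ D).ncard : ℝ) / ((u₁ * u₂ * D : ℕ) : ℝ) ^ n ≤
      ∏ p ∈ u₂.primeFactors, (primeExt τ p : ℝ) / p := by
  classical
  set P := u₂.primeFactors with hP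
  have hprime : ∀ p : P, (p : ℕ).Prime := fun p => Nat.prime_of_mem_primeFactors p.2
  have hfac : ∀ p : P, Fact (p : ℕ).Prime := fun p => ⟨hprime p⟩
  have : NeZero (u₁ * D) := ⟨mul_ne_zero hu₁ hD⟩
  have : NeZero (u₁ * u₂ * D) := ⟨mul_ne_zero (mul_ne_zero hu₁ hsq.ne_zero) hD⟩
  set Z : ∀ p : P, Finset (Fin n → ZMod p) := fun p => Finset.univ.filter fun x =>
    ∃ i, ∑ m, (@PadicInt.toZMod p ⟨hprime p⟩) (𝓛 p (hprime p) i m) * x m = 0 with hZ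
  have hZcard : ∀ p : P, ((Z p).card : ℝ) ≤ (p : ℝ) ^ n * ((primeExt τ p : ℝ) / p) := by
    intro p
    have h := card_exists_linear_zero_mul_le
      (hne p (hprime p) (Nat.dvd_of_mem_primeFactors p.2))
    rw [primeExt_of_prime τ (hprime p), mul_div_assoc', le_div_iff₀
      (by exact_mod_cast (hprime p).pos), mul_comm (_ ^ n)]
    exact_mod_cast h
  have hcast : ∀ {m : ℕ}, m ∣ u₁ * u₂ * D → ∀ a : ℤ,
      ZMod.cast (a : ZMod (u₁ * u₂ * D)) = (a : ZMod m) := fun h a => ZMod.cast_intCast h a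
  have hpl : ∀ p : P, (p : ℕ) ∣ u₁ * u₂ * D := fun p =>
    ((Nat.dvd_of_mem_primeFactors p.2).mul_left _).mul_right _
  have hul : u₁ * D ∣ u₁ * u₂ * D := ⟨u₂, by ring⟩
  set φ : (Fin n → ZMod (u₁ * u₂ * D)) → (Fin n → ZMod (u₁ * D)) × (∀ p : P, Fin n → ZMod p) :=
    fun m => (fun i => (m i).cast, fun p i => (m i).cast) with hφ
  have hmaps : ∀ m ∈ Rset F 𝓛 Fstar k u₁ u₂ D,
      φ m ∈ (((Finset.univ : Finset (Fin n → ZMod (u₁ * D))) ×ˢ Fintype.piFinset Z : Finset _) :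
        Set ((Fin n → ZMod (u₁ * D)) × (∀ p : P, Fin n → ZMod p))) := by
    rintro m ⟨a, ham, -, hu₂, -, hS⟩
    simp only [Finset.coe_product, Set.mem_prod, Finset.mem_coe, Finset.mem_univ, true_and,
      Fintype.mem_piFinset, hφ, hZ, Finset.mem_filter]
    intro p
    have hpu := Nat.dvd_of_mem_primeFactors p.2
    obtain ⟨i, hi⟩ := (hfact p (hprime p)).exists_linear_zero
      ((Int.natCast_dvd_natCast.2 hpu).trans hu₂) (hS p (hprime p) (hpu.mul_left _))
    refine ⟨i, ?_⟩
    simpa only [← ham, hcast (hpl p)] using hi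
  have hinj : Set.InjOn φ (Rset F 𝓛 Fstar k u₁ u₂ D) := by
    rintro m ⟨a, ham, -⟩ m' ⟨a', ham', -⟩ h
    obtain ⟨h1, h2⟩ := Prod.mk.inj h
    funext i
    have h1i := congrFun h1 i
    rw [← ham, ← ham', hcast hul, hcast hul, ZMod.intCast_eq_intCast_iff_dvd_sub] at h1i
    have h2i : (u₂ : ℤ) ∣ a' i - a i := by
      rw [← Nat.prod_primeFactors_of_squarefree hsq, Nat.cast_prod]
      refine Finset.prod_dvd_of_coprime (fun p hp q hq hpq => ?_) fun p hp => ?_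
      · exact Nat.isCoprime_iff_coprime.2 ((Nat.coprime_primes (Nat.prime_of_mem_primeFactors hp)
          (Nat.prime_of_mem_primeFactors hq)).2 hpq)
      · have := congrFun (congrFun h2 ⟨p, hp⟩) i
        rwa [← ham, ← ham', hcast (hpl ⟨p, hp⟩), hcast (hpl ⟨p, hp⟩),
          ZMod.intCast_eq_intCast_iff_dvd_sub] at this
    rw [← ham, ← ham', ZMod.intCast_eq_intCast_iff_dvd_sub]
    have h3 := (Nat.isCoprime_iff_coprime.2 hcop).mul_dvd h1i h2i
    refine dvd_trans (dvd_of_eq ?_) h3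
    push_cast
    ring
  have hcard : ((Rset F 𝓛 Fstar k u₁ u₂ D).ncard : ℝ) ≤
      ((u₁ * D : ℕ) : ℝ) ^ n * ∏ p : P, ((Z p).card : ℝ) := by
    have h := Set.ncard_le_ncard_of_injOn φ hmaps hinj (Finset.finite_toSet _)
    rw [Set.ncard_coe_finset, Finset.card_product, Fintype.card_piFinset, Finset.card_univ,
      Fintype.card_fun, ZMod.card, Fintype.card_fin] at h
    exact_mod_cast h
  rw [div_le_iff₀ (by have := NeZero.pos (u₁ * u₂ * D); positivity)]
  refine hcard.trans ((mul_le_mul_of_nonneg_left (Finset.prod_le_prod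
    (fun _ _ => Nat.cast_nonneg _) fun p _ => hZcard p) (by positivity)).trans (le_of_eq ?_))
  rw [Finset.prod_mul_distrib, Finset.prod_coe_sort P fun p => (p : ℝ) ^ n,
    Finset.prod_coe_sort P fun p => (primeExt τ p : ℝ) / p, Finset.prod_pow, ← Nat.cast_prod,
    Nat.prod_primeFactors_of_squarefree hsq]
  push_cast
  ring

theorem prod_Ioc_one_add_inv (z : ℕ) : ∏ m ∈ Finset.Ioc 0 z, (1 + 1 / (m : ℝ)) = z + 1 := by
  induction z with
  | zero => simp
  | succ z ih =>
    rw [← Finset.insert_Ioc_right_eq_Ioc_add_one (Nat.zero_le z), Finset.prod_insert (by simp), ih]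
    push_cast
    field_simp

/-- If `g ≤ a` on `S`, then `∏ (1 + g(p) / p)` over `p ∈ S` grows at most polynomially. -/
theorem prod_one_add_div_le {S : Finset ℕ} {z a : ℕ} (hS : S ⊆ Finset.Ioc 0 z) {g : ℕ → ℝ}
    (hg : ∀ p ∈ S, 0 ≤ g p) (hga : ∀ p ∈ S, g p ≤ a) :
    ∏ p ∈ S, (1 + g p / p) ≤ ((z : ℝ) + 1) ^ a := by
  rw [← prod_Ioc_one_add_inv, ← Finset.prod_pow]
  calc ∏ p ∈ S, (1 + g p / p) ≤ ∏ p ∈ S, (1 + 1 / (p : ℝ)) ^ a := by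
        refine Finset.prod_le_prod (fun p hp => ?_) fun p hp => ?_
        · have := hg p hp
          positivity
        · refine le_trans ?_ (one_add_mul_le_pow (a := 1 / (p : ℝ)) ?_ a)
          · rw [mul_one_div]
            have := hga p hp
            gcongr
          · have : (0 : ℝ) ≤ 1 / p := by positivity
            linarith
    _ ≤ _ := by
        refine Finset.prod_le_prod_of_subset_of_one_le hS (fun p _ => by positivity)
          fun p _ _ => one_le_pow₀ ?_
        have : (0 : ℝ) ≤ 1 / p := by positivity
        linarith

/-- Weighting the small prime factors of squarefree integers by `k` costs a power of `z`. -/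
theorem sum_prod_mul_pow_card_le {p₀ D k : ℕ} {C : ℝ} (hC : 0 ≤ C) {g : ℕ → ℝ}
    (hg : ∀ p, 0 ≤ g p) (hgD : ∀ p, p.Prime → p₀ < p → g p ≤ D)
    (hsum : ∀ X : ℝ, 0 ≤ X → ∑ u ∈ (Finset.Ioc 0 ⌊X⌋₊).filter
      (fun u => Squarefree u ∧ ∀ p ∈ u.primeFactors, p₀ < p), ∏ p ∈ u.primeFactors, g p ≤ C * X)
    {X : ℝ} (hX : 0 ≤ X) (z : ℕ) :
    ∑ u ∈ (Finset.Ioc 0 ⌊X⌋₊).filter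
        (fun u => Squarefree u ∧ ∀ p ∈ u.primeFactors, p₀ < p),
      (∏ p ∈ u.primeFactors, g p) * (k : ℝ) ^ (u.primeFactors.filter (· ≤ z)).card ≤
      C * X * ((z : ℝ) + 1) ^ (k * D) := by
  set U : ℝ → Finset ℕ := fun X => (Finset.Ioc 0 ⌊X⌋₊).filter
    (fun u => Squarefree u ∧ ∀ p ∈ u.primeFactors, p₀ < p) with hU
  set P : Finset ℕ := (Finset.Ioc 0 z).filter fun p => p.Prime ∧ p₀ < p with hP
  set s : ℕ → Finset ℕ := fun u => u.primeFactors.filter (· ≤ z) with hs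
  set w : ℕ → ℕ := fun u => ∏ p ∈ u.primeFactors.filter (fun p => ¬ p ≤ z), p with hw
  have hmaps : ∀ u ∈ U X, s u ∈ P.powerset := by
    intro u hu
    obtain ⟨-, -, hu⟩ := Finset.mem_filter.1 hu
    refine Finset.mem_powerset.2 fun p hp => ?_
    obtain ⟨hp, hpz⟩ := Finset.mem_filter.1 hp
    have hpp := Nat.prime_of_mem_primeFactors hp
    exact Finset.mem_filter.2 ⟨Finset.mem_Ioc.2 ⟨hpp.pos, hpz⟩, hpp, hu p hp⟩
  have hwf : ∀ u, (w u).primeFactors = u.primeFactors.filter (fun p => ¬ p ≤ z) := fun u =>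
    Nat.primeFactors_prod fun p hp =>
      Nat.prime_of_mem_primeFactors (Finset.mem_filter.1 hp).1
  have hsplit : ∀ u, Squarefree u → (∏ p ∈ s u, p) * w u = u := fun u hu => by
    rw [hs, hw, Finset.prod_filter_mul_prod_filter_not, Nat.prod_primeFactors_of_squarefree hu]
  rw [← Finset.sum_fiberwise_of_maps_to hmaps]
  have hfib : ∀ S ∈ P.powerset, ∑ u ∈ (U X).filter (fun u => s u = S),
      (∏ p ∈ u.primeFactors, g p) * (k : ℝ) ^ (s u).card ≤
      C * X * ∏ p ∈ S, k * g p / p := by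
    intro S hS
    have hSpos : 0 < ∏ p ∈ S, p := Finset.prod_pos fun p hp =>
      (Finset.mem_Ioc.1 (Finset.mem_filter.1 (Finset.mem_powerset.1 hS hp)).1).1
    have hSpos' : (0 : ℝ) < ((∏ p ∈ S, p : ℕ) : ℝ) := by exact_mod_cast hSpos
    have hterm : ∀ u ∈ (U X).filter (fun u => s u = S),
        (∏ p ∈ u.primeFactors, g p) * (k : ℝ) ^ (s u).card =
        (∏ p ∈ S, k * g p) * ∏ p ∈ (w u).primeFactors, g p := by
      intro u hu
      obtain ⟨-, rfl⟩ := Finset.mem_filter.1 hu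
      rw [hwf, ← Finset.prod_filter_mul_prod_filter_not u.primeFactors (· ≤ z),
        Finset.prod_mul_distrib, Finset.prod_const]
      ring
    have hinj : Set.InjOn w ((U X).filter (fun u => s u = S)) := by
      intro u hu v hv huv
      obtain ⟨hu, hus⟩ := Finset.mem_filter.1 (Finset.mem_coe.1 hu)
      obtain ⟨hv, hvs⟩ := Finset.mem_filter.1 (Finset.mem_coe.1 hv)
      rw [← hsplit u (Finset.mem_filter.1 hu).2.1, ← hsplit v (Finset.mem_filter.1 hv).2.1,
        hus, hvs, huv]
    have himage : ((U X).filter (fun u => s u = S)).image w ⊆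
        U (X / ((∏ p ∈ S, p : ℕ) : ℝ)) := by
      intro m hm
      obtain ⟨u, hu, rfl⟩ := Finset.mem_image.1 hm
      obtain ⟨huX, rfl⟩ := Finset.mem_filter.1 hu
      obtain ⟨hux, hsq, hup⟩ := Finset.mem_filter.1 huX
      have huw := hsplit u hsq
      have hw0 : w u ≠ 0 := by
        rintro h
        rw [h, mul_zero] at huw
        exact hsq.ne_zero huw.symm
      refine Finset.mem_filter.2 ⟨Finset.mem_Ioc.2 ⟨Nat.pos_of_ne_zero hw0,
        Nat.le_floor ?_⟩, hsq.squarefree_of_dvd ⟨_, (mul_comm (w u) _ ▸ huw).symm⟩, fun p hp => ?_⟩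
      · rw [le_div_iff₀ hSpos', mul_comm, ← Nat.cast_mul, huw]
        exact (Nat.le_floor_iff hX).1 (Finset.mem_Ioc.1 hux).2
      · rw [hwf] at hp
        exact hup p (Finset.mem_filter.1 hp).1
    calc _ = (∏ p ∈ S, k * g p) * ∑ m ∈ ((U X).filter (fun u => s u = S)).image w,
          ∏ p ∈ m.primeFactors, g p := by
          rw [Finset.sum_congr rfl hterm, ← Finset.mul_sum, Finset.sum_image hinj]
      _ ≤ (∏ p ∈ S, k * g p) * (C * (X / ((∏ p ∈ S, p : ℕ) : ℝ))) := by
          refine mul_le_mul_of_nonneg_left ((Finset.sum_le_sum_of_subset_of_nonneg himage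
            fun m _ _ => Finset.prod_nonneg fun p _ => hg p).trans (hsum _ (by positivity)))
            (Finset.prod_nonneg fun p _ => mul_nonneg (Nat.cast_nonneg _) (hg p))
      _ = _ := by
          rw [Finset.prod_div_distrib, Nat.cast_prod]
          ring
  refine (Finset.sum_le_sum hfib).trans ?_
  rw [← Finset.mul_sum, ← Finset.prod_one_add]
  refine mul_le_mul_of_nonneg_left (prod_one_add_div_le (Finset.filter_subset _ _)
    (fun p _ => mul_nonneg (Nat.cast_nonneg _) (hg p)) fun p hp => ?_) (by positivity)
  obtain ⟨-, hpp, hlt⟩ := Finset.mem_filter.1 hp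
  push_cast
  exact mul_le_mul_of_nonneg_left (hgD p hpp hlt) (Nat.cast_nonneg _)

/-- The primes `p ≤ y` with `p ≡ 1 (mod k)`. -/
def primesOneMod (k : ℕ) (y : ℝ) : Finset ℕ :=
  (Finset.Ioc 0 ⌊y⌋₊).filter fun p => p.Prime ∧ p % k = 1

theorem div_log_le_div_log {x y : ℝ} (hx : Real.exp 1 ≤ x) (hxy : x ≤ y) :
    x / Real.log x ≤ y / Real.log y := by
  have hpos : ∀ {z : ℝ}, Real.exp 1 ≤ z → 0 < Real.log z / z := fun {z} hz => by
    have h0 : 0 < z := (Real.exp_pos 1).trans_le hz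
    have := (Real.le_log_iff_exp_le h0).2 hz
    positivity
  have h := Real.log_div_self_antitoneOn (Set.mem_ofPred_eq ▸ hx)
    (Set.mem_ofPred_eq ▸ hx.trans hxy) hxy
  have := inv_anti₀ (hpos (hx.trans hxy)) h
  rwa [inv_div, inv_div] at this

theorem eventually_pow_mul_sq_le_exp_div_log {c : ℝ} (hc : 0 < c) (A : ℕ) :
    ∀ᶠ x : ℝ in atTop, (x + 1) ^ A * x ^ 2 ≤ Real.exp (c * (x / Real.log x)) := by
  have h := (Real.isLittleO_pow_log_id_atTop (n := 2)).bound
    (show 0 < c / (2 * A + 2) by positivity)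
  filter_upwards [h, eventually_ge_atTop (Real.exp 1), eventually_ge_atTop 2] with x hx he h2
  have hx0 : 0 < x := by linarith
  have hlog : 1 ≤ Real.log x := (Real.le_log_iff_exp_le hx0).2 he
  rw [Real.norm_of_nonneg (by positivity), id_eq, Real.norm_of_nonneg hx0.le, div_mul_eq_mul_div,
    le_div_iff₀ (by positivity)] at hx
  have h1 : x + 1 ≤ x ^ 2 := by nlinarith
  calc (x + 1) ^ A * x ^ 2 ≤ (x ^ 2) ^ A * x ^ 2 := by gcongr
    _ = Real.exp ((2 * A + 2) * Real.log x) := by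
        rw [mul_comm _ (Real.log x), Real.exp_mul, Real.exp_log hx0, ← pow_mul, ← pow_add]
        norm_cast
    _ ≤ _ := by
        refine Real.exp_le_exp.2 ?_
        rw [mul_div_assoc', le_div_iff₀ (by linarith)]
        nlinarith

/-- Sums over `j ≥ x` of polynomials against `k ^ (-π(j / 12; k, 1))`. -/
theorem exists_sum_pow_div_le {k : ℕ} (hk : 2 ≤ k) : ∃ c : ℝ, 0 < c ∧ ∀ A : ℕ, ∃ K : ℝ, 0 < K ∧
    ∀ᶠ x : ℝ in atTop, ∀ I : Finset ℕ, (∀ j ∈ I, x ≤ (j : ℝ)) →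
      ∑ j ∈ I, ((j : ℝ) + 1) ^ A / (k : ℝ) ^ (primesOneMod k ((j : ℝ) / 12)).card ≤
        K * Real.exp (-(c * (x / Real.log x))) := by
  obtain ⟨c₀, hc₀, hπ⟩ := exists_card_primes_one_mod_ge k hk
  have hk1 : (1 : ℝ) < k := by exact_mod_cast hk
  have hlogk := Real.log_pos hk1
  set c := Real.log k * c₀ / 24 with hc
  have hcpos : 0 < c := by positivity
  refine ⟨c, hcpos, fun A => ?_⟩
  have hsum : Summable fun j : ℕ => 1 / (j : ℝ) ^ 2 := Real.summable_one_div_nat_pow.2 one_lt_two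
  refine ⟨∑' j : ℕ, 1 / (j : ℝ) ^ 2, hsum.tsum_pos (fun _ => by positivity) 1 (by simp), ?_⟩
  have hev : ∀ᶠ x : ℝ in atTop, (x + 1) ^ A / (k : ℝ) ^ (primesOneMod k (x / 12)).card ≤
      1 / x ^ 2 * Real.exp (-(c * (x / Real.log x))) := by
    filter_upwards [(tendsto_id.atTop_div_const (show (0 : ℝ) < 12 by norm_num)).eventually hπ,
      eventually_pow_mul_sq_le_exp_div_log hcpos A, eventually_gt_atTop 12] with x h1 h2 h12
    have hx0 : 0 < x := by linarith
    have hl12 : 0 < Real.log (x / 12) := Real.log_pos (by linarith)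
    have hl : Real.log (x / 12) ≤ Real.log x := Real.log_le_log (by positivity) (by linarith)
    have h3 : Real.exp (2 * (c * (x / Real.log x))) ≤
        (k : ℝ) ^ (primesOneMod k (x / 12)).card := by
      rw [← Real.rpow_natCast, Real.rpow_def_of_pos (by linarith)]
      refine Real.exp_le_exp.2 ?_
      calc 2 * (c * (x / Real.log x)) = Real.log k * (c₀ * (x / 12 / Real.log x)) := by
            rw [hc]; ring
        _ ≤ Real.log k * (c₀ * (x / 12 / Real.log (x / 12))) := by gcongr
        _ ≤ _ := mul_le_mul_of_nonneg_left h1 hlogk.le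
    rw [div_le_iff₀ (by positivity)]
    calc (x + 1) ^ A = 1 / x ^ 2 * ((x + 1) ^ A * x ^ 2) := by field_simp
      _ ≤ 1 / x ^ 2 * Real.exp (c * (x / Real.log x)) := by gcongr
      _ = 1 / x ^ 2 * Real.exp (-(c * (x / Real.log x))) *
            Real.exp (2 * (c * (x / Real.log x))) := by
          rw [mul_assoc, ← Real.exp_add]
          congr 2
          ring
      _ ≤ _ := by gcongr
  obtain ⟨x₀, hx₀⟩ := eventually_atTop.1 hev
  filter_upwards [eventually_ge_atTop x₀, eventually_ge_atTop (Real.exp 1)] with x hx he I hI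
  calc _ ≤ ∑ j ∈ I, 1 / (j : ℝ) ^ 2 * Real.exp (-(c * (x / Real.log x))) := by
        refine Finset.sum_le_sum fun j hj => (hx₀ j (hx.trans (hI j hj))).trans ?_
        have := div_log_le_div_log he (hI j hj)
        gcongr
    _ ≤ _ := by
        rw [← Finset.sum_mul]
        exact mul_le_mul_of_nonneg_right (hsum.sum_le_tsum I fun _ _ => by positivity)
          (Real.exp_pos _).le

/-- The primes dividing `𝒟(u)`. -/
def scrDPrimes (k : ℕ) (ξ B : ℝ) (u : ℕ) : Finset ℕ :=
  (primesOneMod k (Real.log (B ^ 2 / (u : ℝ)) / 12)).filter fun p => ξ < (p : ℝ) ∧ ¬ p ∣ u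

theorem mem_primesOneMod {k p : ℕ} {y : ℝ} :
    p ∈ primesOneMod k y ↔ p.Prime ∧ (p : ℝ) ≤ y ∧ p % k = 1 := by
  rw [primesOneMod, Finset.mem_filter, Finset.mem_Ioc]
  refine ⟨fun ⟨⟨h0, h1⟩, h2, h3⟩ => ⟨h2, (Nat.le_floor_iff' h0.ne').1 h1, h3⟩,
    fun ⟨h1, h2, h3⟩ => ⟨⟨h1.pos, Nat.le_floor h2⟩, h1, h3⟩⟩

theorem scrD_eq_prod (k : ℕ) (ξ B : ℝ) (u : ℕ) : scrD k ξ B u = ∏ p ∈ scrDPrimes k ξ B u, p := by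
  rw [scrD, ← finprod_mem_coe_finset]
  congr! 3 with p
  simp only [scrDPrimes, Finset.coe_filter, mem_primesOneMod, Set.mem_ofPred_eq]
  tauto

theorem prime_of_mem_scrDPrimes {k p u : ℕ} {ξ B : ℝ} (hp : p ∈ scrDPrimes k ξ B u) : p.Prime :=
  (mem_primesOneMod.1 (Finset.mem_filter.1 hp).1).1

theorem primeFactors_scrD (k : ℕ) (ξ B : ℝ) (u : ℕ) :
    (scrD k ξ B u).primeFactors = scrDPrimes k ξ B u := by
  rw [scrD_eq_prod, Nat.primeFactors_prod fun p hp => prime_of_mem_scrDPrimes hp]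

theorem scrD_ne_zero (k : ℕ) (ξ B : ℝ) (u : ℕ) : scrD k ξ B u ≠ 0 := by
  rw [scrD_eq_prod]
  exact Finset.prod_ne_zero_iff.2 fun p hp => (prime_of_mem_scrDPrimes hp).ne_zero

theorem card_primesOneMod_le {k u : ℕ} (hu : u ≠ 0) {ξ B : ℝ} {j : ℕ}
    (hj : j = ⌊Real.log (B ^ 2 / (u : ℝ))⌋₊) (hT : 0 ≤ Real.log (B ^ 2 / (u : ℝ))) :
    (primesOneMod k ((j : ℝ) / 12)).card ≤ (scrD k ξ B u).primeFactors.card + ⌊ξ⌋₊ +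
      (u.primeFactors.filter (· ≤ j)).card := by
  have hjT : (j : ℝ) ≤ Real.log (B ^ 2 / (u : ℝ)) := hj ▸ Nat.floor_le hT
  have hsub : primesOneMod k ((j : ℝ) / 12) ⊆ (scrD k ξ B u).primeFactors ∪ Finset.Ioc 0 ⌊ξ⌋₊ ∪
      u.primeFactors.filter (· ≤ j) := by
    intro p hp
    obtain ⟨hpp, hpj, hpk⟩ := mem_primesOneMod.1 hp
    rw [Finset.mem_union, Finset.mem_union, primeFactors_scrD]
    by_cases h1 : p ∣ u
    · refine Or.inr (Finset.mem_filter.2 ⟨Nat.mem_primeFactors.2 ⟨hpp, h1, hu⟩, ?_⟩)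
      have : (p : ℝ) ≤ j := hpj.trans (div_le_self (Nat.cast_nonneg _) (by norm_num))
      exact_mod_cast this
    · by_cases h2 : ξ < p
      · refine Or.inl (Or.inl (Finset.mem_filter.2 ⟨mem_primesOneMod.2 ⟨hpp, ?_, hpk⟩, h2, h1⟩))
        linarith
      · exact Or.inl (Or.inr (Finset.mem_Ioc.2 ⟨hpp.pos, Nat.le_floor (not_lt.1 h2)⟩))
  refine (Finset.card_le_card hsub).trans ((Finset.card_union_le _ _).trans ?_)
  gcongr
  refine (Finset.card_union_le _ _).trans ?_
  simp

/-- The sum over `u₂`, split according to the integer part of `log (B² / u₂)`. -/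
theorem sum_prod_div_pow_le {p₀ D k : ℕ} (hk : k ≠ 0) {C : ℝ} (hC : 0 ≤ C) {g : ℕ → ℝ}
    (hg : ∀ p, 0 ≤ g p) (hgD : ∀ p, p.Prime → p₀ < p → g p ≤ D)
    (hsum : ∀ X : ℝ, 0 ≤ X → ∑ u ∈ (Finset.Ioc 0 ⌊X⌋₊).filter
      (fun u => Squarefree u ∧ ∀ p ∈ u.primeFactors, p₀ < p), ∏ p ∈ u.primeFactors, g p ≤ C * X)
    {ξ B : ℝ} (hB : 0 < B) {U : Finset ℕ}
    (hU : ∀ u ∈ U, Squarefree u ∧ ∀ p ∈ u.primeFactors, p₀ < p)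
    (hT : ∀ u ∈ U, 0 ≤ Real.log (B ^ 2 / (u : ℝ))) :
    ∑ u ∈ U, (∏ p ∈ u.primeFactors, g p / p) / (k : ℝ) ^ (scrD k ξ B u).primeFactors.card ≤
      Real.exp 1 * C * (k : ℝ) ^ ⌊ξ⌋₊ *
        ∑ j ∈ U.image (fun u : ℕ => ⌊Real.log (B ^ 2 / (u : ℝ))⌋₊),
          ((j : ℝ) + 1) ^ (k * D) / (k : ℝ) ^ (primesOneMod k ((j : ℝ) / 12)).card := by
  have hkpos : (0 : ℝ) < k := by exact_mod_cast Nat.pos_of_ne_zero hk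
  have hk1 : (1 : ℝ) ≤ k := by exact_mod_cast Nat.one_le_iff_ne_zero.2 hk
  set J : ℕ → ℕ := fun u => ⌊Real.log (B ^ 2 / (u : ℝ))⌋₊ with hJ
  rw [← Finset.sum_fiberwise_of_maps_to (g := J) (t := U.image J)
    fun u hu => Finset.mem_image_of_mem J hu, Finset.mul_sum]
  refine Finset.sum_le_sum fun j _ => ?_
  set q := (k : ℝ) ^ (primesOneMod k ((j : ℝ) / 12)).card with hq
  have hqpos : 0 < q := by positivity
  have hterm : ∀ u ∈ U.filter (fun u => J u = j),
      (∏ p ∈ u.primeFactors, g p / p) / (k : ℝ) ^ (scrD k ξ B u).primeFactors.card ≤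
      Real.exp (j + 1) / B ^ 2 * (k : ℝ) ^ ⌊ξ⌋₊ / q * ((∏ p ∈ u.primeFactors, g p) *
        (k : ℝ) ^ (u.primeFactors.filter (· ≤ j)).card) := by
    intro u hu
    obtain ⟨hu, huj⟩ := Finset.mem_filter.1 hu
    have hsq := (hU u hu).1
    have hu0 : (0 : ℝ) < u := by exact_mod_cast Nat.pos_of_ne_zero hsq.ne_zero
    have hcard := card_primesOneMod_le (k := k) (ξ := ξ) hsq.ne_zero huj.symm (hT u hu)
    have hpow : q ≤ (k : ℝ) ^ (scrD k ξ B u).primeFactors.card * (k : ℝ) ^ ⌊ξ⌋₊ *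
        (k : ℝ) ^ (u.primeFactors.filter (· ≤ j)).card := by
      rw [← pow_add, ← pow_add]
      exact pow_le_pow_right₀ hk1 hcard
    have hinv : 1 / (u : ℝ) ≤ Real.exp (j + 1) / B ^ 2 := by
      rw [div_le_div_iff₀ hu0 (by positivity), one_mul, ← div_le_iff₀ hu0,
        ← Real.log_le_iff_le_exp (by positivity), ← huj]
      exact (Nat.lt_floor_add_one _).le
    have hG : 0 ≤ ∏ p ∈ u.primeFactors, g p := Finset.prod_nonneg fun p _ => hg p
    rw [Finset.prod_div_distrib, ← Nat.cast_prod, Nat.prod_primeFactors_of_squarefree hsq,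
      div_le_iff₀ (by positivity)]
    calc (∏ p ∈ u.primeFactors, g p) / (u : ℝ)
        = (∏ p ∈ u.primeFactors, g p) * (1 / (u : ℝ)) * (q / q) := by
          rw [div_self hqpos.ne']; ring
      _ ≤ (∏ p ∈ u.primeFactors, g p) * (Real.exp (j + 1) / B ^ 2) *
          ((k : ℝ) ^ (scrD k ξ B u).primeFactors.card * (k : ℝ) ^ ⌊ξ⌋₊ *
            (k : ℝ) ^ (u.primeFactors.filter (· ≤ j)).card / q) := by gcongr
      _ = _ := by ring
  have hsub : U.filter (fun u => J u = j) ⊆ (Finset.Ioc 0 ⌊B ^ 2 * Real.exp (-j)⌋₊).filter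
      (fun u => Squarefree u ∧ ∀ p ∈ u.primeFactors, p₀ < p) := by
    intro u hu
    obtain ⟨hu, huj⟩ := Finset.mem_filter.1 hu
    have hupos := Nat.pos_of_ne_zero (hU u hu).1.ne_zero
    have hu0 : (0 : ℝ) < u := by exact_mod_cast hupos
    refine Finset.mem_filter.2 ⟨Finset.mem_Ioc.2 ⟨hupos, Nat.le_floor ?_⟩, hU u hu⟩
    have h := Nat.floor_le (hT u hu)
    rw [show ⌊Real.log (B ^ 2 / (u : ℝ))⌋₊ = j from huj,
      Real.le_log_iff_exp_le (by positivity), le_div_iff₀ hu0] at h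
    rw [Real.exp_neg, ← div_eq_mul_inv, le_div_iff₀ (Real.exp_pos _)]
    linarith
  calc _ ≤ ∑ u ∈ (Finset.Ioc 0 ⌊B ^ 2 * Real.exp (-j)⌋₊).filter
          (fun u => Squarefree u ∧ ∀ p ∈ u.primeFactors, p₀ < p),
        Real.exp (j + 1) / B ^ 2 * (k : ℝ) ^ ⌊ξ⌋₊ / q * ((∏ p ∈ u.primeFactors, g p) *
          (k : ℝ) ^ (u.primeFactors.filter (· ≤ j)).card) := by
        refine (Finset.sum_le_sum hterm).trans
          (Finset.sum_le_sum_of_subset_of_nonneg hsub fun u _ _ => ?_)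
        have : 0 ≤ ∏ p ∈ u.primeFactors, g p := Finset.prod_nonneg fun p _ => hg p
        positivity
    _ ≤ Real.exp (j + 1) / B ^ 2 * (k : ℝ) ^ ⌊ξ⌋₊ / q *
        (C * (B ^ 2 * Real.exp (-j)) * ((j : ℝ) + 1) ^ (k * D)) := by
        rw [← Finset.mul_sum]
        exact mul_le_mul_of_nonneg_left
          (sum_prod_mul_pow_card_le hC hg hgD hsum (by positivity) j) (by positivity)
    _ = _ := by
        rw [Real.exp_add, Real.exp_neg]
        field_simp

theorem pow_floor_le_exp {k : ℕ} (hk : 2 ≤ k) {ξ : ℝ} (hξ : 0 ≤ ξ) :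
    (k : ℝ) ^ ⌊ξ⌋₊ ≤ Real.exp (((k : ℝ) - 1) * ξ) := by
  have hk2 : (2 : ℝ) ≤ k := by exact_mod_cast hk
  have h1 : (k : ℝ) ≤ Real.exp ((k : ℝ) - 1) := by
    linarith [Real.add_one_le_exp ((k : ℝ) - 1)]
  calc (k : ℝ) ^ ⌊ξ⌋₊ ≤ Real.exp ((k : ℝ) - 1) ^ ⌊ξ⌋₊ := by gcongr
    _ = Real.exp (((k : ℝ) - 1) * ⌊ξ⌋₊) := by rw [mul_comm, Real.exp_nat_mul]
    _ ≤ _ := by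
        have := Nat.floor_le hξ
        have : (0 : ℝ) ≤ (k : ℝ) - 1 := by linarith
        gcongr

theorem card_divisors_prod_prime_pow {S : Finset ℕ} (hS : ∀ p ∈ S, p.Prime) (e : ℕ) :
    (∏ p ∈ S, p ^ e).divisors.card = (e + 1) ^ S.card := by
  induction S using Finset.induction_on with
  | empty => simp
  | insert q S hq ih =>
    have hqp := hS q (Finset.mem_insert_self q S)
    have hSp : ∀ p ∈ S, p.Prime := fun p hp => hS p (Finset.mem_insert_of_mem hp)
    have hcop : Nat.Coprime (q ^ e) (∏ p ∈ S, p ^ e) :=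
      Nat.Coprime.prod_right fun p hp => Nat.Coprime.pow _ _
        ((Nat.coprime_primes hqp (hSp p hp)).2 fun h => hq (h ▸ hp))
    rw [Finset.prod_insert hq, hcop.card_divisors_mul, ih hSp, Nat.divisors_prime_pow hqp,
      Finset.card_map, Finset.card_range, Finset.card_insert_of_notMem hq, pow_succ, mul_comm]

theorem Cxi_eq_prod (k : ℕ) (ξ : ℝ) :
    Cxi k ξ = ∏ p ∈ (Finset.Ioc 0 ⌊ξ⌋₊).filter Nat.Prime, p ^ (k - 1) := by
  rw [Cxi, ← finprod_mem_coe_finset]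
  congr! 3 with p
  simp only [Finset.coe_filter, Finset.mem_Ioc, Set.mem_ofPred_eq]
  exact ⟨fun ⟨h1, h2⟩ => ⟨⟨h1.pos, Nat.le_floor h2⟩, h1⟩,
    fun ⟨⟨h0, h1⟩, h2⟩ => ⟨h2, (Nat.le_floor_iff' h0.ne').1 h1⟩⟩

theorem Cxi_ne_zero (k : ℕ) (ξ : ℝ) : Cxi k ξ ≠ 0 := by
  rw [Cxi_eq_prod]
  exact Finset.prod_ne_zero_iff.2 fun p hp => pow_ne_zero _ (Finset.mem_filter.1 hp).2.ne_zero

theorem le_of_prime_of_dvd_Cxi {k p : ℕ} {ξ : ℝ} (hp : p.Prime) (h : p ∣ Cxi k ξ) :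
    (p : ℝ) ≤ ξ := by
  rw [Cxi_eq_prod, hp.prime.dvd_finsetProd_iff] at h
  obtain ⟨q, hq, hpq⟩ := h
  obtain ⟨hq, hqp⟩ := Finset.mem_filter.1 hq
  obtain ⟨h0, h1⟩ := Finset.mem_Ioc.1 hq
  rw [(Nat.prime_dvd_prime_iff_eq hp hqp).1 (hp.dvd_of_dvd_pow hpq)]
  exact (Nat.le_floor_iff' h0.ne').1 h1

theorem card_divisors_Cxi_le {k : ℕ} (hk : 2 ≤ k) (ξ : ℝ) :
    (Cxi k ξ).divisors.card ≤ k ^ ⌊ξ⌋₊ := by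
  rw [Cxi_eq_prod, card_divisors_prod_prime_pow fun p hp => (Finset.mem_filter.1 hp).2,
    Nat.sub_add_cancel (by omega)]
  refine Nat.pow_le_pow_right (by omega) ((Finset.card_filter_le _ _).trans ?_)
  simp

/-- `U2set` as a finset. -/
def U2finset (ξ₁ ξ₂ ξ₃ : ℝ) : Finset ℕ :=
  (Finset.Ioc 0 ⌊ξ₃⌋₊).filter fun u => Squarefree u ∧
    ∀ p ∈ u.primeFactors, ξ₁ < (p : ℝ) ∧ (p : ℝ) ≤ ξ₂

theorem mem_U2finset {ξ₁ ξ₂ ξ₃ : ℝ} {u : ℕ} : u ∈ U2finset ξ₁ ξ₂ ξ₃ ↔ u ∈ U2set ξ₁ ξ₂ ξ₃ := by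
  rw [U2finset, U2set, Finset.mem_filter, Finset.mem_Ioc, Set.mem_ofPred_eq]
  refine ⟨fun ⟨⟨h0, h1⟩, h2⟩ => ⟨h0, (Nat.le_floor_iff' h0.ne').1 h1, h2⟩,
    fun ⟨h0, h1, h2⟩ => ⟨⟨h0, Nat.le_floor h1⟩, h2⟩⟩

theorem N4sum_eq_sum {n : ℕ} (F : MvPolynomial (Fin n) ℤ) {τ : ∀ p : ℕ, p.Prime → ℕ}
    (𝓛 : ∀ (p : ℕ) (hp : p.Prime), Fin (τ p hp) → Fin n → @PadicInt p ⟨hp⟩)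
    (Fstar : ∀ (p : ℕ) (hp : p.Prime), MvPolynomial (Fin n) (@PadicInt p ⟨hp⟩))
    (k : ℕ) (C₁ : ℝ) (ξ₁ : ℝ → ℝ) (B : ℝ) :
    N4sum F 𝓛 Fstar k C₁ ξ₁ B = ∑ u₁ ∈ (Cxi k (ξ₁ B)).divisors,
      ∑ u₂ ∈ U2finset (ξ₁ B) (xi2 n B) (xi3 C₁ k B),
        Mplus (u₁ * u₂ * scrD k (ξ₁ B) B u₂)
          (Rset F 𝓛 Fstar k u₁ u₂ (scrD k (ξ₁ B) B u₂)) B /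
          (k : ℝ) ^ (scrD k (ξ₁ B) B u₂).primeFactors.card := by
  have h1 : {u₁ : ℕ | u₁ ∣ Cxi k (ξ₁ B)} = ((Cxi k (ξ₁ B)).divisors : Set ℕ) := by
    ext u
    simp [Nat.mem_divisors, Cxi_ne_zero]
  have h2 : U2set (ξ₁ B) (xi2 n B) (xi3 C₁ k B) =
      (U2finset (ξ₁ B) (xi2 n B) (xi3 C₁ k B) : Set ℕ) := by
    ext u
    exact mem_U2finset.symm
  rw [N4sum, h1, h2, finsum_mem_coe_finset]
  exact Finset.sum_congr rfl fun u₁ _ => finsum_mem_coe_finset _ _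

theorem N4sum_nonneg {n : ℕ} (F : MvPolynomial (Fin n) ℤ) {τ : ∀ p : ℕ, p.Prime → ℕ}
    (𝓛 : ∀ (p : ℕ) (hp : p.Prime), Fin (τ p hp) → Fin n → @PadicInt p ⟨hp⟩)
    (Fstar : ∀ (p : ℕ) (hp : p.Prime), MvPolynomial (Fin n) (@PadicInt p ⟨hp⟩))
    (k : ℕ) (C₁ : ℝ) (ξ₁ : ℝ → ℝ) {B : ℝ} (hB : 0 ≤ B) : 0 ≤ N4sum F 𝓛 Fstar k C₁ ξ₁ B := by
  rw [N4sum_eq_sum]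
  refine Finset.sum_nonneg fun u₁ _ => Finset.sum_nonneg fun u₂ _ => ?_
  rw [Mplus]
  positivity

/-- Bounding the densities of the sets `ℛ_l` in `N₄(B)`. -/
theorem N4sum_le {n k p₀ : ℕ} {F : MvPolynomial (Fin n) ℤ} {τ : ∀ p : ℕ, p.Prime → ℕ}
    {𝓛 : ∀ (p : ℕ) (hp : p.Prime), Fin (τ p hp) → Fin n → @PadicInt p ⟨hp⟩}
    {Fstar : ∀ (p : ℕ) (hp : p.Prime), MvPolynomial (Fin n) (@PadicInt p ⟨hp⟩)}
    (hfact : ∀ (p : ℕ) (hp : p.Prime), IsPadicFact F p hp (𝓛 p hp) (Fstar p hp))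
    (hne : ∀ (p : ℕ) (hp : p.Prime), p₀ < p → ∀ i, ∃ m,
      (@PadicInt.toZMod p ⟨hp⟩) (𝓛 p hp i m) ≠ 0)
    {C₁ B : ℝ} {ξ₁ : ℝ → ℝ} (hB : 0 ≤ B) (hξ : (p₀ : ℝ) ≤ ξ₁ B) :
    N4sum F 𝓛 Fstar k C₁ ξ₁ B ≤ (3 * B) ^ n * (Cxi k (ξ₁ B)).divisors.card *
      ∑ u ∈ U2finset (ξ₁ B) (xi2 n B) (xi3 C₁ k B),
        (∏ p ∈ u.primeFactors, (primeExt τ p : ℝ) / p) /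
          (k : ℝ) ^ (scrD k (ξ₁ B) B u).primeFactors.card := by
  rw [N4sum_eq_sum]
  refine (Finset.sum_le_card_nsmul _ _ ((3 * B) ^ n *
    ∑ u ∈ U2finset (ξ₁ B) (xi2 n B) (xi3 C₁ k B),
        (∏ p ∈ u.primeFactors, (primeExt τ p : ℝ) / p) /
          (k : ℝ) ^ (scrD k (ξ₁ B) B u).primeFactors.card) fun u₁ hu₁ => ?_).trans
    (le_of_eq (by rw [nsmul_eq_mul]; ring))
  rw [Finset.mul_sum]
  refine Finset.sum_le_sum fun u₂ hu₂ => ?_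
  obtain ⟨hpos, -, hsq, hp⟩ := mem_U2finset.1 hu₂
  have hu₁C := Nat.dvd_of_mem_divisors hu₁
  have hξp : ∀ p : ℕ, p.Prime → p ∣ u₂ → ξ₁ B < p := fun p hpp hpu =>
    (hp p (Nat.mem_primeFactors.2 ⟨hpp, hpu, hsq.ne_zero⟩)).1
  have hcop : Nat.Coprime (u₁ * scrD k (ξ₁ B) B u₂) u₂ := by
    refine Nat.Coprime.mul_left (Nat.coprime_of_dvd fun p hpp h1 h2 => ?_)
      (Nat.coprime_of_dvd fun p hpp h1 h2 => ?_)
    · exact (hξp p hpp h2).not_ge (le_of_prime_of_dvd_Cxi hpp (h1.trans hu₁C))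
    · have := Nat.mem_primeFactors.2 ⟨hpp, h1, scrD_ne_zero _ _ _ _⟩
      rw [primeFactors_scrD] at this
      exact (Finset.mem_filter.1 this).2.2 h2
  have h := ncard_Rset_div_le hfact (k := k) (ne_zero_of_dvd_ne_zero (Cxi_ne_zero _ _) hu₁C)
    (scrD_ne_zero k (ξ₁ B) B u₂) hsq hcop fun p hpp hpu =>
      hne p hpp (by exact_mod_cast hξ.trans_lt (hξp p hpp hpu))
  rw [Mplus, mul_div_assoc, mul_div_assoc]
  gcongr

theorem tendsto_log_log : Tendsto (fun B : ℝ => Real.log (Real.log B)) atTop atTop :=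
  Real.tendsto_log_atTop.comp Real.tendsto_log_atTop

theorem eventually_log2_eq : ∀ᶠ B : ℝ in atTop, log2 B = Real.log (Real.log B) := by
  filter_upwards [Real.tendsto_log_atTop.eventually_ge_atTop 1,
    tendsto_log_log.eventually_ge_atTop 1] with B h1 h2
  rw [log2, log1, log1, max_eq_right h1, max_eq_right h2]

theorem eventually_log3_eq :
    ∀ᶠ B : ℝ in atTop, log3 B = Real.log (Real.log (Real.log B)) := by
  filter_upwards [eventually_log2_eq,
    (Real.tendsto_log_atTop.comp tendsto_log_log).eventually_ge_atTop 1] with B h1 h2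
  rw [log3, log1, h1]
  exact max_eq_right h2

/-- For `u ≤ ξ₃`, the quantity `log (B² / u)` exceeds `log log B + 1`. -/
theorem eventually_log_log_add_one_le {C₁ : ℝ} (hC₁ : 0 < C₁) {k : ℕ} (hk : 2 ≤ k) :
    ∀ᶠ B : ℝ in atTop, ∀ u : ℕ, 0 < u → (u : ℝ) ≤ xi3 C₁ k B →
      Real.log (Real.log B) + 1 ≤ Real.log (B ^ 2 / (u : ℝ)) := by
  filter_upwards [eventually_gt_atTop 0, Real.tendsto_log_atTop.eventually_gt_atTop 0,
    tendsto_log_log.eventually_ge_atTop 0,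
    tendsto_log_log.eventually_ge_atTop (3 * (1 + Real.log C₁))] with B hB hl hll0 hll u hu0 hu
  have hu0' : (0 : ℝ) < u := by exact_mod_cast hu0
  have hk2 : (2 : ℝ) ≤ k := by exact_mod_cast hk
  have h1 : Real.log u ≤ Real.log C₁ + 2 * Real.log B +
      -(2 * (k : ℝ)) / 3 * Real.log (Real.log B) := by
    refine (Real.log_le_log hu0' hu).trans (le_of_eq ?_)
    rw [xi3, Real.log_mul (by positivity) (by positivity), Real.log_mul (by positivity)
      (by positivity), Real.log_pow, Real.log_rpow hl]
    norm_num
  rw [Real.log_div (by positivity) (by positivity), Real.log_pow]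
  push_cast
  nlinarith [mul_le_mul_of_nonneg_right hk2 hll0]

/-- The bound for `N₄(B)` in terms of `ξ₁`. -/
theorem exists_N4sum_le {n d k : ℕ} (hn : 2 ≤ n) (hd : n < d) (hk : 2 ≤ k)
    {F : MvPolynomial (Fin n) ℤ} {L : Fin d → Fin n → ℂ} (hF : IsDecomp F L)
    (hirr : Irreducible (F.map (Int.castRingHom ℚ))) (hΔ : discProd L ≠ 0)
    {C₁ : ℝ} (hC₁ : 0 < C₁) {τ : ∀ p : ℕ, p.Prime → ℕ}
    {𝓛 : ∀ (p : ℕ) (hp : p.Prime), Fin (τ p hp) → Fin n → @PadicInt p ⟨hp⟩}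
    {Fstar : ∀ (p : ℕ) (hp : p.Prime), MvPolynomial (Fin n) (@PadicInt p ⟨hp⟩)}
    (hfact : ∀ (p : ℕ) (hp : p.Prime), IsPadicFact F p hp (𝓛 p hp) (Fstar p hp)) :
    ∃ C₄ : ℝ, 0 < C₄ ∧ ∀ ξ₁ : ℝ → ℝ, Tendsto ξ₁ atTop atTop → ∃ C : ℝ, 0 < C ∧
      ∀ᶠ B : ℝ in atTop, N4sum F 𝓛 Fstar k C₁ ξ₁ B ≤
        C * B ^ n * Real.exp (2 * ((n : ℝ) + 1) * ((k : ℝ) - 1) * ξ₁ B) *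
          Real.exp (-(C₄ * log2 B / log3 B)) := by
  obtain ⟨p₀, D, C, hC, hτD, hne, hsum⟩ := exists_sum_prod_tau_le hn hd hF hirr hΔ hfact
  obtain ⟨c, hc, htail⟩ := exists_sum_pow_div_le hk
  obtain ⟨K, hK, htail⟩ := htail (k * D)
  refine ⟨c, hc, fun ξ₁ hξ => ⟨3 ^ n * (Real.exp 1 * C * K), by positivity, ?_⟩⟩
  filter_upwards [eventually_gt_atTop 0, hξ.eventually_ge_atTop (p₀ : ℝ),
    tendsto_log_log.eventually htail, tendsto_log_log.eventually_ge_atTop 0,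
    eventually_log_log_add_one_le hC₁ hk, eventually_log2_eq, eventually_log3_eq]
    with B hB hξB htailB hll0 hT h2 h3
  have hk2 : (2 : ℝ) ≤ k := by exact_mod_cast hk
  have hξ0 : 0 ≤ ξ₁ B := (Nat.cast_nonneg _).trans hξB
  set U := U2finset (ξ₁ B) (xi2 n B) (xi3 C₁ k B) with hU
  have hTU : ∀ u ∈ U, Real.log (Real.log B) + 1 ≤ Real.log (B ^ 2 / (u : ℝ)) := fun u hu => by
    obtain ⟨h0, h1, -⟩ := mem_U2finset.1 hu
    exact hT u h0 h1
  have hinner := sum_prod_div_pow_le (k := k) (ξ := ξ₁ B) (by omega) hC.le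
    (g := fun p => (primeExt τ p : ℝ)) (fun p => Nat.cast_nonneg _)
    (fun p hp hlt => by
      rw [primeExt_of_prime τ hp]
      exact_mod_cast hτD p hp hlt) hsum hB (U := U)
    (fun u hu => by
      obtain ⟨-, -, hsq, hp⟩ := mem_U2finset.1 hu
      exact ⟨hsq, fun p hpu => by exact_mod_cast hξB.trans_lt (hp p hpu).1⟩)
    (fun u hu => by linarith [hTU u hu])
  have htailU := htailB (U.image fun u : ℕ => ⌊Real.log (B ^ 2 / (u : ℝ))⌋₊) (by
    intro j hj
    obtain ⟨u, hu, rfl⟩ := Finset.mem_image.1 hj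
    linarith [hTU u hu, Nat.sub_one_lt_floor (Real.log (B ^ 2 / (u : ℝ)))])
  set x := Real.log (Real.log B) with hx
  have hE := pow_floor_le_exp hk hξ0
  set E := Real.exp (((k : ℝ) - 1) * ξ₁ B) with hEdef
  set W := Real.exp (-(c * (x / Real.log x))) with hW
  have hdiv : ((Cxi k (ξ₁ B)).divisors.card : ℝ) ≤ E :=
    le_trans (by exact_mod_cast card_divisors_Cxi_le hk (ξ₁ B)) hE
  have hEE : E * E ≤ Real.exp (2 * ((n : ℝ) + 1) * ((k : ℝ) - 1) * ξ₁ B) := by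
    rw [hEdef, ← Real.exp_add]
    refine Real.exp_le_exp.2 ?_
    have : 0 ≤ ((k : ℝ) - 1) * ξ₁ B := mul_nonneg (by linarith) hξ0
    nlinarith [mul_nonneg (Nat.cast_nonneg (α := ℝ) n) this]
  calc N4sum F 𝓛 Fstar k C₁ ξ₁ B
      ≤ (3 * B) ^ n * (Cxi k (ξ₁ B)).divisors.card * _ := N4sum_le hfact hne hB.le hξB
    _ ≤ (3 * B) ^ n * E * (Real.exp 1 * C * E * (K * W)) := by
        refine mul_le_mul (by gcongr) (hinner.trans ?_) ?_ (by positivity)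
        · gcongr
        · exact Finset.sum_nonneg fun u _ => div_nonneg (Finset.prod_nonneg fun p _ =>
            by positivity) (by positivity)
    _ = 3 ^ n * (Real.exp 1 * C * K) * B ^ n * (E * E) * W := by
        rw [mul_pow]; ring
    _ ≤ 3 ^ n * (Real.exp 1 * C * K) * B ^ n *
          Real.exp (2 * ((n : ℝ) + 1) * ((k : ℝ) - 1) * ξ₁ B) * W := by gcongr
    _ = _ := by rw [hW, h2, h3, mul_div_assoc]

theorem tendsto_log2_div_log3 : Tendsto (fun B => log2 B / log3 B) atTop atTop := by
  have h : Tendsto (fun x : ℝ => x / Real.log x) atTop atTop := by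
    have h0 : Tendsto (fun x : ℝ => Real.log x / x) atTop (nhdsWithin 0 (Set.Ioi 0)) := by
      refine tendsto_nhdsWithin_iff.2 ⟨?_, ?_⟩
      · simpa using Real.isLittleO_log_id_atTop.tendsto_div_nhds_zero
      · filter_upwards [eventually_gt_atTop 1] with x hx
        exact div_pos (Real.log_pos hx) (by linarith)
    exact (tendsto_inv_nhdsGT_zero.comp h0).congr fun x => inv_div _ _
  refine (h.comp tendsto_log_log).congr' ?_
  filter_upwards [eventually_log2_eq, eventually_log3_eq] with B h2 h3
  rw [h2, h3]
  rfl

theorem stmt15 (n d k : ℕ) (hn : 2 ≤ n) (hd : n < d) (hk : 2 ≤ k)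
    (F : MvPolynomial (Fin n) ℤ) (L : Fin d → Fin n → ℂ)
    (hF : IsDecomp F L) (hirr : Irreducible (F.map (Int.castRingHom ℚ)))
    (hΔ : discProd L ≠ 0)
    (hkd : ((d : ℝ) - 2) / (n : ℝ) ≤ (k : ℝ)) (C₁ : ℝ) (hC₁ : 0 < C₁)
    (τ : ∀ p : ℕ, p.Prime → ℕ)
    (𝓛 : ∀ (p : ℕ) (hp : p.Prime), Fin (τ p hp) → Fin n → @PadicInt p ⟨hp⟩)
    (Fstar : ∀ (p : ℕ) (hp : p.Prime), MvPolynomial (Fin n) (@PadicInt p ⟨hp⟩))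
    (hfact : ∀ (p : ℕ) (hp : p.Prime), IsPadicFact F p hp (𝓛 p hp) (Fstar p hp)) :
    ∃ C₄ : ℝ, 0 < C₄ ∧
      (∀ ξ₁ : ℝ → ℝ, Xi1Good ξ₁ → ∃ C : ℝ, 0 < C ∧ ∀ᶠ B : ℝ in atTop,
        N4sum F 𝓛 Fstar k C₁ ξ₁ B ≤
          C * B ^ n * Real.exp (2 * ((n : ℝ) + 1) * ((k : ℝ) - 1) * ξ₁ B) /
            Real.log B ^ (C₄ / log3 B)) ∧
      (∃ C' : ℝ, 0 < C' ∧
        (∀ᶠ B : ℝ in atTop,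
          N4sum F 𝓛 Fstar k C₁
            (fun B => max 1 (C₄ * log2 B / (4 * ((n : ℝ) + 1) * ((k : ℝ) - 1) * log3 B))) B ≤
            C' * B ^ n * Real.exp (-C₄ * log2 B / (2 * log3 B))) ∧
        Tendsto (fun B : ℝ =>
          N4sum F 𝓛 Fstar k C₁
            (fun B => max 1 (C₄ * log2 B / (4 * ((n : ℝ) + 1) * ((k : ℝ) - 1) * log3 B))) B
          / B ^ n) atTop (nhds 0)) := by
  obtain ⟨C₄, hC₄, hmain⟩ := exists_N4sum_le hn hd hk hF hirr hΔ hC₁ hfact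
  have hk1 : (0 : ℝ) < (k : ℝ) - 1 := by
    have : (2 : ℝ) ≤ k := by exact_mod_cast hk
    linarith
  have hlog3 : ∀ B, 0 < log3 B := fun B => one_pos.trans_le (le_max_left _ _)
  refine ⟨C₄, hC₄, fun ξ₁ hξ => ?_, ?_⟩
  · obtain ⟨C, hC, h⟩ := hmain ξ₁ hξ.2.1
    refine ⟨C, hC, ?_⟩
    filter_upwards [h, eventually_log2_eq, Real.tendsto_log_atTop.eventually_gt_atTop 0]
      with B hB h2 hl
    refine hB.trans (le_of_eq ?_)
    rw [Real.rpow_def_of_pos hl, Real.exp_neg, ← div_eq_mul_inv, h2]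
    congr 2
    ring
  · set ξ : ℝ → ℝ := fun B =>
      max 1 (C₄ * log2 B / (4 * ((n : ℝ) + 1) * ((k : ℝ) - 1) * log3 B)) with hξdef
    have hlin : Tendsto (fun B => C₄ * log2 B / (4 * ((n : ℝ) + 1) * ((k : ℝ) - 1) * log3 B))
        atTop atTop := by
      have hc : 0 < C₄ / (4 * ((n : ℝ) + 1) * ((k : ℝ) - 1)) := by positivity
      refine (tendsto_log2_div_log3.const_mul_atTop hc).congr fun B => ?_
      rw [div_mul_div_comm]
    have hξ : Tendsto ξ atTop atTop := tendsto_atTop_mono (fun B => le_max_right _ _) hlin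
    obtain ⟨C, hC, h⟩ := hmain ξ hξ
    have hbound : ∀ᶠ B : ℝ in atTop, N4sum F 𝓛 Fstar k C₁ ξ B ≤
        C * B ^ n * Real.exp (-C₄ * log2 B / (2 * log3 B)) := by
      filter_upwards [h, hlin.eventually_ge_atTop 1] with B hB h1
      refine hB.trans (le_of_eq ?_)
      rw [mul_assoc _ (Real.exp _), ← Real.exp_add, hξdef]
      simp only [max_eq_right h1]
      congr 2
      have := hlog3 B
      field_simp
      ring
    refine ⟨C, hC, hbound, ?_⟩
    have hlim : Tendsto (fun B => C * Real.exp (-C₄ * log2 B / (2 * log3 B))) atTop (nhds 0) := by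
      rw [← mul_zero C]
      refine (Real.tendsto_exp_atBot.comp ?_).const_mul C
      refine (tendsto_log2_div_log3.const_mul_atTop_of_neg
        (show -C₄ / 2 < 0 by linarith)).congr fun B => ?_
      rw [div_mul_div_comm]
    refine squeeze_zero' ?_ ?_ hlim
    · filter_upwards [eventually_ge_atTop 0] with B hB
      exact div_nonneg (N4sum_nonneg F 𝓛 Fstar k C₁ ξ hB) (by positivity)
    · filter_upwards [hbound, eventually_gt_atTop 0] with B hB h0
      rw [div_le_iff₀ (by positivity)]
      linarith

end
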